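/- arXiv:1112.2017 — 3 statements merged into one kernel-verified Lean document; each statement's English description precedes it below -/
import Mathlib

section
/- Let C, r > 0 and ε ∈ (0,1), and choose γ with 0 < γ < rε and a positive integer n with n(rε − γ) > 1 and rn > 1. Let (M_t)_{t∈[0,1]} and (X_t)_{t∈[0,1]} be real-valued stochastic processes on a probability space such that: (i) almost surely, X has finite variation on [0,1] and |X_t − X_s| ≤ C|t − s|^r for all s, t ∈ [0,1]; (ii) there is a constant K such that for all s, t ∈ [0,1], E[|M_t − M_s|^n / |X_t − X_s|^{(1−ε)n}] ≤ K|t − s|^{rεn}, where the quotient |a|/0 is interpreted as +∞ for a ≠ 0 and as 0 for a = 0. Then M admits a continuous modification whose sample paths almost surely have finite 1/(1−ε)-variation on [0,1]. -/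
/-!
The proof is pathwise chaining along dyadic points, with the total variation of `X` as a control.

Write `q = 1 - ε`. Summing the moment hypothesis over all pairs of neighbouring dyadic points of
level `k`, weighted by `2^{kγn}`, gives a convergent series because `n(rε - γ) > 1`. Hence almost
surely there is a finite `A` with
`|M_{(j+1)/2^k} - M_{j/2^k}| ≤ A 2^{-kγ} |X_{(j+1)/2^k} - X_{j/2^k}|^q` for all `k` and `j`.
Let `g` be the variation function of `X`, a monotone function with `|X_t - X_s| ≤ g t - g s`
(`exists_control`).

* Two dyadic points `s < t` are joined through the coarsest dyadic point of `[s,t]` using, on each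
  side, at most one dyadic step per level, all within `[s,t]` (`chain_left`, `chain_right`). As
  `∑ 2^{-kγ}` converges, `|M_t - M_s| ≤ A' (g t - g s)^q` (`dyadic_var`), so sums of
  `|M_t - M_s|^{1/q}` over dyadic partitions are at most `A'^{1/q} (g 1 - g 0)`.
* If instead `|t - s| ≤ 2^{-m}`, both points are joined to a common point of level `m`, and only
  levels `≥ m` occur, so `|M_t - M_s|` is at most a constant times `2^{-mγ}` (`dyadic_mod`).

The modification is the limit of `M` along the dyadic points `⌊2^k t⌋/2^k`. It inherits both
bounds (`path_regular`). It agrees almost surely with `M_t` because the ratios between `t` and its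
dyadic approximations have summable moments, hence are almost surely bounded in `k`, while
`X_{⌊2^k t⌋/2^k} → X_t`.
-/

open MeasureTheory Set

/-- `f` has finite `p`-variation on `[a,b]`: the sums `∑ |f(t_{i+1}) - f(t_i)|^p` over
finite partitions `a = t_0 < t_1 < ... < t_N = b` are uniformly bounded. -/
def HasFinitePVariationOn (f : ℝ → ℝ) (p a b : ℝ) : Prop :=
  ∃ V : ℝ, ∀ (N : ℕ) (t : ℕ → ℝ), t 0 = a → t N = b →
    (∀ i, i < N → t i < t (i + 1)) →
    ∑ i ∈ Finset.range N, |f (t (i + 1)) - f (t i)| ^ p ≤ V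

/-! ### Dyadic chaining -/

/-- One-sided chaining to the right: a level-`(m+d)` point `i/2^(m+d)` inside
`[j/2^m, (j+1)/2^m]` is reached from `j/2^m` using at most one dyadic step of each level
`m, …, m+d`, all inside the interval between the two points. -/
lemma chain_right {f g : ℝ → ℝ} {A q ρ : ℝ} (hA : 0 ≤ A) (hq : 0 < q) (hρ : 0 < ρ)
    (hg : MonotoneOn g (Icc 0 1))
    (h : ∀ k j : ℕ, j < 2 ^ k → |f (((j + 1 : ℕ) : ℝ) / 2 ^ k) - f ((j : ℝ) / 2 ^ k)| ≤
      A * ρ ^ k * (g (((j + 1 : ℕ) : ℝ) / 2 ^ k) - g ((j : ℝ) / 2 ^ k)) ^ q)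
    (m d : ℕ) : ∀ i j : ℕ, i ≤ 2 ^ (m + d) → j * 2 ^ d ≤ i → i ≤ (j + 1) * 2 ^ d →
      |f ((i : ℝ) / 2 ^ (m + d)) - f ((j : ℝ) / 2 ^ m)| ≤
        A * (∑ l ∈ Finset.range (d + 1), ρ ^ (m + l)) *
          (g ((i : ℝ) / 2 ^ (m + d)) - g ((j : ℝ) / 2 ^ m)) ^ q := by
  induction d with
  | zero =>
    intro i j hi h1 h2
    simp only [pow_zero, mul_one] at h1 h2
    obtain rfl | rfl : i = j ∨ i = j + 1 := by omega
    · simp [Real.zero_rpow hq.ne']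
    · simpa using h m j (by simpa using hi)
  | succ d ih =>
    intro i j hi h1 h2
    obtain ⟨i', rfl | rfl⟩ : ∃ i', i = 2 * i' ∨ i = 2 * i' + 1 := ⟨i / 2, by omega⟩
    all_goals
      have e1 : j * 2 ^ (d + 1) = 2 * (j * 2 ^ d) := by ring
      have e2 : (j + 1) * 2 ^ (d + 1) = 2 * ((j + 1) * 2 ^ d) := by ring
      have e3 : 2 ^ (m + (d + 1)) = 2 * 2 ^ (m + d) := by ring
      have e4 : ((2 * i' : ℕ) : ℝ) / 2 ^ (m + (d + 1)) = (i' : ℝ) / 2 ^ (m + d) := by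
        rw [← add_assoc, pow_succ]; push_cast; field_simp
      have key := ih i' j (by omega) (by omega) (by omega)
      have hu : (j : ℝ) / 2 ^ m ≤ (i' : ℝ) / 2 ^ (m + d) := by
        rw [pow_add, div_le_div_iff₀ (by positivity) (by positivity)]
        have : (j : ℝ) * 2 ^ d ≤ i' := by exact_mod_cast (show j * 2 ^ d ≤ i' by omega)
        nlinarith [pow_pos (two_pos (α := ℝ)) m]
      have hi1 : (i' : ℝ) / 2 ^ (m + d) ≤ 1 := by
        rw [div_le_one (by positivity)]
        exact_mod_cast (show i' ≤ 2 ^ (m + d) by omega)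
      have hgu := hg ⟨by positivity, hu.trans hi1⟩ ⟨by positivity, hi1⟩ hu
      rw [Finset.sum_range_succ]
    · rw [e4]
      have n1 := Real.rpow_nonneg (sub_nonneg.2 hgu) q
      refine key.trans (mul_le_mul_of_nonneg_right ?_ n1)
      exact mul_le_mul_of_nonneg_left (le_add_of_nonneg_right (by positivity)) hA
    · have hs := h (m + (d + 1)) (2 * i') (by omega)
      rw [e4] at hs
      have hi2 : ((2 * i' + 1 : ℕ) : ℝ) / 2 ^ (m + (d + 1)) ≤ 1 := by
        rw [div_le_one (by positivity)]
        exact_mod_cast hi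
      have hle : (i' : ℝ) / 2 ^ (m + d) ≤ ((2 * i' + 1 : ℕ) : ℝ) / 2 ^ (m + (d + 1)) := by
        rw [← e4]; gcongr; omega
      have hgt := hg ⟨by positivity, hi1⟩ ⟨by positivity, hi2⟩ hle
      set t := ((2 * i' + 1 : ℕ) : ℝ) / 2 ^ (m + (d + 1))
      set v := (i' : ℝ) / 2 ^ (m + d)
      set u := (j : ℝ) / 2 ^ m
      have b1 : (g v - g u) ^ q ≤ (g t - g u) ^ q :=
        Real.rpow_le_rpow (by linarith) (by linarith) hq.le
      have b2 : (g t - g v) ^ q ≤ (g t - g u) ^ q :=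
        Real.rpow_le_rpow (by linarith) (by linarith) hq.le
      calc |f t - f u| ≤ |f t - f v| + |f v - f u| := abs_sub_le _ _ _
        _ ≤ A * ρ ^ (m + (d + 1)) * (g t - g u) ^ q +
            A * (∑ l ∈ Finset.range (d + 1), ρ ^ (m + l)) * (g t - g u) ^ q := by
          refine add_le_add (hs.trans ?_) (key.trans ?_) <;> gcongr
        _ = _ := by ring

/-- Mirror image of `chain_right`: chaining from `j/2^m` to a point on its left. -/
lemma chain_left {f g : ℝ → ℝ} {A q ρ : ℝ} (hA : 0 ≤ A) (hq : 0 < q) (hρ : 0 < ρ)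
    (hg : MonotoneOn g (Icc 0 1))
    (h : ∀ k j : ℕ, j < 2 ^ k → |f (((j + 1 : ℕ) : ℝ) / 2 ^ k) - f ((j : ℝ) / 2 ^ k)| ≤
      A * ρ ^ k * (g (((j + 1 : ℕ) : ℝ) / 2 ^ k) - g ((j : ℝ) / 2 ^ k)) ^ q)
    (m d : ℕ) : ∀ i j : ℕ, j ≤ 2 ^ m → i ≤ j * 2 ^ d → j * 2 ^ d ≤ i + 2 ^ d →
      |f ((j : ℝ) / 2 ^ m) - f ((i : ℝ) / 2 ^ (m + d))| ≤
        A * (∑ l ∈ Finset.range (d + 1), ρ ^ (m + l)) *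
          (g ((j : ℝ) / 2 ^ m) - g ((i : ℝ) / 2 ^ (m + d))) ^ q := by
  induction d with
  | zero =>
    intro i j hj h1 h2
    simp only [pow_zero, mul_one] at h1 h2
    obtain rfl | rfl : j = i ∨ j = i + 1 := by omega
    · simp [Real.zero_rpow hq.ne']
    · simpa using h m i (by omega)
  | succ d ih =>
    intro i j hj h1 h2
    have hj1 : (j : ℝ) / 2 ^ m ≤ 1 := by
      rw [div_le_one (by positivity)]
      exact_mod_cast hj
    have e1 : j * 2 ^ (d + 1) = 2 * (j * 2 ^ d) := by ring
    have e2 : 2 ^ (d + 1) = 2 * 2 ^ d := by ring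
    have e3 : 2 ^ (m + (d + 1)) = 2 * 2 ^ (m + d) := by ring
    have e5 : j * 2 ^ d ≤ 2 ^ (m + d) := by rw [pow_add]; gcongr
    have e4 : ∀ i' : ℕ, ((2 * i' : ℕ) : ℝ) / 2 ^ (m + (d + 1)) = (i' : ℝ) / 2 ^ (m + d) := by
      intro i'
      rw [← add_assoc, pow_succ]; push_cast; field_simp
    have hu : ∀ i' : ℕ, i' ≤ j * 2 ^ d → (i' : ℝ) / 2 ^ (m + d) ≤ (j : ℝ) / 2 ^ m := by
      intro i' hi'
      rw [pow_add, div_le_div_iff₀ (by positivity) (by positivity)]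
      have : (i' : ℝ) ≤ j * 2 ^ d := by exact_mod_cast hi'
      nlinarith [pow_pos (two_pos (α := ℝ)) m]
    rw [Finset.sum_range_succ]
    obtain ⟨i', rfl | rfl⟩ : ∃ i', i = 2 * i' ∨ i = 2 * i' + 1 := ⟨i / 2, by omega⟩
    · have key := ih i' j hj (by omega) (by omega)
      have hu' := hu i' (by omega)
      have hgu := hg ⟨by positivity, hu'.trans hj1⟩ ⟨by positivity, hj1⟩ hu'
      rw [e4]
      have n1 := Real.rpow_nonneg (sub_nonneg.2 hgu) q
      refine key.trans (mul_le_mul_of_nonneg_right ?_ n1)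
      exact mul_le_mul_of_nonneg_left (le_add_of_nonneg_right (by positivity)) hA
    · have key := ih (i' + 1) j hj (by omega) (by omega)
      have hu' := hu (i' + 1) (by omega)
      have hgu := hg ⟨by positivity, hu'.trans hj1⟩ ⟨by positivity, hj1⟩ hu'
      have hs := h (m + (d + 1)) (2 * i' + 1) (by omega)
      rw [show 2 * i' + 1 + 1 = 2 * (i' + 1) by ring, e4] at hs
      have hle : ((2 * i' + 1 : ℕ) : ℝ) / 2 ^ (m + (d + 1)) ≤ ((i' + 1 : ℕ) : ℝ) / 2 ^ (m + d) := by
        rw [← e4]; gcongr; omega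
      have hgt := hg ⟨by positivity, hle.trans (hu'.trans hj1)⟩
        ⟨by positivity, hu'.trans hj1⟩ hle
      set t := ((2 * i' + 1 : ℕ) : ℝ) / 2 ^ (m + (d + 1))
      set v := ((i' + 1 : ℕ) : ℝ) / 2 ^ (m + d)
      set u := (j : ℝ) / 2 ^ m
      have b1 : (g u - g v) ^ q ≤ (g u - g t) ^ q :=
        Real.rpow_le_rpow (by linarith) (by linarith) hq.le
      have b2 : (g v - g t) ^ q ≤ (g u - g t) ^ q :=
        Real.rpow_le_rpow (by linarith) (by linarith) hq.le
      calc |f u - f t| ≤ |f u - f v| + |f v - f t| := abs_sub_le _ _ _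
        _ ≤ A * (∑ l ∈ Finset.range (d + 1), ρ ^ (m + l)) * (g u - g t) ^ q +
            A * ρ ^ (m + (d + 1)) * (g u - g t) ^ q := by
          refine add_le_add (key.trans ?_) (hs.trans ?_) <;> gcongr
        _ = _ := by ring

lemma sum_pow_add_le {ρ : ℝ} (hρ : 0 < ρ) (hρ1 : ρ < 1) (m d : ℕ) :
    ∑ l ∈ Finset.range (d + 1), ρ ^ (m + l) ≤ ρ ^ m / (1 - ρ) := by
  simp_rw [pow_add]
  rw [← Finset.mul_sum, div_eq_mul_inv]
  gcongr
  rw [← tsum_geometric_of_lt_one hρ.le hρ1]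
  exact (summable_geometric_of_lt_one hρ.le hρ1).sum_le_tsum _ (fun _ _ => by positivity)

/-- Any dyadic interval contains a coarsest dyadic point, from which both endpoints are within
one step of the level of that point. -/
lemma exists_coarsest (N a b : ℕ) (hab : a ≤ b) (hb : b ≤ 2 ^ N) :
    ∃ m d j : ℕ, m + d = N ∧ j ≤ 2 ^ m ∧ a ≤ j * 2 ^ d ∧ j * 2 ^ d ≤ b ∧
      b ≤ (j + 1) * 2 ^ d ∧ j * 2 ^ d ≤ a + 2 ^ d := by
  classical
  let P : ℕ → Prop := fun d => ∃ j, a ≤ j * 2 ^ d ∧ j * 2 ^ d ≤ b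
  have hP0 : P 0 := ⟨a, by simp, by simpa using hab⟩
  have hP : P (Nat.findGreatest P N) := Nat.findGreatest_spec (Nat.zero_le N) hP0
  have hle : Nat.findGreatest P N ≤ N := Nat.findGreatest_le N
  have hmax : ∀ k, Nat.findGreatest P N < k → k ≤ N → ¬ P k :=
    fun k h1 h2 => Nat.findGreatest_is_greatest h1 h2
  generalize Nat.findGreatest P N = d at *
  obtain ⟨j, h1, h2⟩ := hP
  obtain ⟨m, rfl⟩ : ∃ m, N = m + d := ⟨N - d, by omega⟩
  have hj : j ≤ 2 ^ m := by
    have : j * 2 ^ d ≤ 2 ^ m * 2 ^ d := by rw [← pow_add]; omega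
    exact Nat.le_of_mul_le_mul_right this (by positivity)
  refine ⟨m, d, j, rfl, hj, h1, h2, ?_⟩
  rcases Nat.eq_zero_or_pos m with rfl | hm
  · simp only [zero_add, pow_zero] at *
    constructor <;> nlinarith [show 0 < 2 ^ d by positivity]
  · have hn := hmax (d + 1) (by omega) (by omega)
    have hno : ∀ i, a ≤ i * 2 ^ (d + 1) → b < i * 2 ^ (d + 1) := by
      intro i hi
      by_contra hc
      exact hn ⟨i, hi, by omega⟩
    obtain ⟨i, rfl | rfl⟩ : ∃ i, j = 2 * i ∨ j = 2 * i + 1 := ⟨j / 2, by omega⟩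
    · have := hno i
      have e : i * 2 ^ (d + 1) = 2 * i * 2 ^ d := by ring
      omega
    · have h3 := hno i
      have h4 := hno (i + 1)
      have e : i * 2 ^ (d + 1) = 2 * i * 2 ^ d := by ring
      have e' : (i + 1) * 2 ^ (d + 1) = 2 * i * 2 ^ d + 2 * 2 ^ d := by ring
      have e'' : (2 * i + 1) * 2 ^ d = 2 * i * 2 ^ d + 2 ^ d := by ring
      have e''' : (2 * i + 1 + 1) * 2 ^ d = 2 * i * 2 ^ d + 2 * 2 ^ d := by ring
      omega

/-- Increments of `f` between dyadic points are controlled by the increments of `g`. -/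
lemma dyadic_var {f g : ℝ → ℝ} {A q ρ : ℝ} (hA : 0 ≤ A) (hq : 0 < q) (hρ : 0 < ρ) (hρ1 : ρ < 1)
    (hg : MonotoneOn g (Icc 0 1))
    (h : ∀ k j : ℕ, j < 2 ^ k → |f (((j + 1 : ℕ) : ℝ) / 2 ^ k) - f ((j : ℝ) / 2 ^ k)| ≤
      A * ρ ^ k * (g (((j + 1 : ℕ) : ℝ) / 2 ^ k) - g ((j : ℝ) / 2 ^ k)) ^ q)
    (N a b : ℕ) (hab : a ≤ b) (hb : b ≤ 2 ^ N) :
      |f ((b : ℝ) / 2 ^ N) - f ((a : ℝ) / 2 ^ N)| ≤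
        2 * A / (1 - ρ) * (g ((b : ℝ) / 2 ^ N) - g ((a : ℝ) / 2 ^ N)) ^ q := by
  obtain ⟨m, d, j, rfl, hj, h1, h2, h3, h4⟩ := exists_coarsest N a b hab hb
  have k1 := chain_right hA hq hρ hg h m d b j hb h2 h3
  have k2 := chain_left hA hq hρ hg h m d a j hj h1 h4
  have hS : ∑ l ∈ Finset.range (d + 1), ρ ^ (m + l) ≤ 1 / (1 - ρ) := by
    refine (sum_pow_add_le hρ hρ1 m d).trans ?_
    have : 0 < 1 - ρ := by linarith
    gcongr
    exact pow_le_one₀ hρ.le hρ1.le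
  have h01 : ∀ i : ℕ, i ≤ 2 ^ (m + d) → (i : ℝ) / 2 ^ (m + d) ∈ Icc (0 : ℝ) 1 := by
    intro i hi
    refine ⟨by positivity, ?_⟩
    rw [div_le_one (by positivity)]
    exact_mod_cast hi
  have eu : (j : ℝ) / 2 ^ m = ((j * 2 ^ d : ℕ) : ℝ) / 2 ^ (m + d) := by
    rw [pow_add]; push_cast; field_simp
  rw [eu] at k1 k2
  have g1 := hg (h01 a (by omega)) (h01 (j * 2 ^ d) (by omega))
    (show (a : ℝ) / 2 ^ (m + d) ≤ ((j * 2 ^ d : ℕ) : ℝ) / 2 ^ (m + d) by gcongr)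
  have g2 := hg (h01 (j * 2 ^ d) (by omega)) (h01 b hb)
    (show ((j * 2 ^ d : ℕ) : ℝ) / 2 ^ (m + d) ≤ (b : ℝ) / 2 ^ (m + d) by gcongr)
  set t := (b : ℝ) / 2 ^ (m + d)
  set s := (a : ℝ) / 2 ^ (m + d)
  set u := ((j * 2 ^ d : ℕ) : ℝ) / 2 ^ (m + d)
  have b1 : (g t - g u) ^ q ≤ (g t - g s) ^ q :=
    Real.rpow_le_rpow (by linarith) (by linarith) hq.le
  have b2 : (g u - g s) ^ q ≤ (g t - g s) ^ q :=
    Real.rpow_le_rpow (by linarith) (by linarith) hq.le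
  have n1 : 0 ≤ (g t - g u) ^ q := Real.rpow_nonneg (by linarith) _
  have n2 : 0 ≤ (g u - g s) ^ q := Real.rpow_nonneg (by linarith) _
  have hd : 0 < 1 - ρ := by linarith
  calc |f t - f s| ≤ |f t - f u| + |f u - f s| := abs_sub_le _ _ _
    _ ≤ A * (1 / (1 - ρ)) * (g t - g s) ^ q + A * (1 / (1 - ρ)) * (g t - g s) ^ q := by
      refine add_le_add (k1.trans ?_) (k2.trans ?_) <;> gcongr
    _ = _ := by ring

/-- Modulus of continuity of `f` on dyadic points. -/
lemma dyadic_mod {f g : ℝ → ℝ} {A q ρ : ℝ} (hA : 0 ≤ A) (hq : 0 < q) (hρ : 0 < ρ) (hρ1 : ρ < 1)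
    (hg : MonotoneOn g (Icc 0 1))
    (h : ∀ k j : ℕ, j < 2 ^ k → |f (((j + 1 : ℕ) : ℝ) / 2 ^ k) - f ((j : ℝ) / 2 ^ k)| ≤
      A * ρ ^ k * (g (((j + 1 : ℕ) : ℝ) / 2 ^ k) - g ((j : ℝ) / 2 ^ k)) ^ q)
    (m d a b : ℕ) (hab : a ≤ b) (hb : b ≤ 2 ^ (m + d)) (hd : b ≤ a + 2 ^ d) :
      |f ((b : ℝ) / 2 ^ (m + d)) - f ((a : ℝ) / 2 ^ (m + d))| ≤
        2 * A / (1 - ρ) * (g 1 - g 0) ^ q * ρ ^ m := by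
  have hp : 0 < 2 ^ d := by positivity
  have hS := sum_pow_add_le hρ hρ1 m d
  have h01 : ∀ M i : ℕ, i ≤ 2 ^ M → (i : ℝ) / 2 ^ M ∈ Icc (0 : ℝ) 1 := by
    intro M i hi
    refine ⟨by positivity, ?_⟩
    rw [div_le_one (by positivity)]
    exact_mod_cast hi
  have hone : 0 < 1 - ρ := by linarith
  have bd : ∀ x ∈ Icc (0 : ℝ) 1, ∀ y ∈ Icc (0 : ℝ) 1, x ≤ y →
      A * (∑ l ∈ Finset.range (d + 1), ρ ^ (m + l)) * (g y - g x) ^ q ≤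
        A * (ρ ^ m / (1 - ρ)) * (g 1 - g 0) ^ q := by
    intro x hx y hy hxy
    have g1 := hg hx hy hxy
    have g2 := hg ⟨le_rfl, zero_le_one⟩ hx hx.1
    have g3 := hg hy ⟨zero_le_one, le_rfl⟩ hy.2
    have b1 : (g y - g x) ^ q ≤ (g 1 - g 0) ^ q :=
      Real.rpow_le_rpow (by linarith) (by linarith) hq.le
    have n1 : 0 ≤ (g y - g x) ^ q := Real.rpow_nonneg (by linarith) _
    gcongr
  obtain ⟨j, hj1, hj2⟩ : ∃ j, j * 2 ^ d ≤ b ∧ b ≤ (j + 1) * 2 ^ d :=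
    ⟨b / 2 ^ d, Nat.div_mul_le_self _ _, by
      have := Nat.lt_div_mul_add hp (a := b); rw [add_mul, one_mul]; exact this.le⟩
  have hj : j ≤ 2 ^ m := by
    have : j * 2 ^ d ≤ 2 ^ m * 2 ^ d := by rw [← pow_add]; omega
    exact Nat.le_of_mul_le_mul_right this (by positivity)
  have eu : (j : ℝ) / 2 ^ m = ((j * 2 ^ d : ℕ) : ℝ) / 2 ^ (m + d) := by
    rw [pow_add]; push_cast; field_simp
  have k1 := (chain_right hA hq hρ hg h m d b j hb hj1 hj2).trans
    (bd _ (h01 _ _ hj) _ (h01 _ _ hb) (by rw [eu]; gcongr))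
  have k2 : |f ((j : ℝ) / 2 ^ m) - f ((a : ℝ) / 2 ^ (m + d))| ≤
      A * (ρ ^ m / (1 - ρ)) * (g 1 - g 0) ^ q := by
    rcases le_total a (j * 2 ^ d) with ha | ha
    · exact (chain_left hA hq hρ hg h m d a j hj ha (by omega)).trans
        (bd _ (h01 _ _ (by omega)) _ (h01 _ _ hj) (by rw [eu]; gcongr))
    · rw [abs_sub_comm]
      exact (chain_right hA hq hρ hg h m d a j (by omega) ha (by omega)).trans
        (bd _ (h01 _ _ hj) _ (h01 _ _ (by omega)) (by rw [eu]; gcongr))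
  calc _ ≤ _ := abs_sub_le _ (f ((j : ℝ) / 2 ^ m)) _
    _ ≤ _ := add_le_add k1 k2
    _ = _ := by ring

/-! ### Variation control and pathwise regularity -/

/-- Every monotone sequence in `[0,1]` can be refined to a strictly increasing partition starting
at `0` and ending at its last point, without decreasing the variation sum. -/
lemma exists_partition (f : ℝ → ℝ) (u : ℕ → ℝ) (hu : Monotone u) (h0 : ∀ i, 0 ≤ u i) (n : ℕ) :
    ∃ (N : ℕ) (t : ℕ → ℝ), t 0 = 0 ∧ t N = u n ∧ (∀ i, i < N → t i < t (i + 1)) ∧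
      ∑ i ∈ Finset.range n, |f (u (i + 1)) - f (u i)| ≤
        ∑ i ∈ Finset.range N, |f (t (i + 1)) - f (t i)| := by
  induction n with
  | zero =>
    rcases (h0 0).eq_or_lt with h | h
    · exact ⟨0, fun _ => 0, rfl, h, by simp, by simp⟩
    · refine ⟨1, fun i => if i = 0 then 0 else u 0, by simp, by simp, ?_, by simp⟩
      intro i hi
      obtain rfl : i = 0 := by omega
      simpa using h
  | succ n ih =>
    obtain ⟨N, t, t0, tN, ht, hs⟩ := ih
    rcases (hu (Nat.le_succ n)).eq_or_lt with h | h
    · refine ⟨N, t, t0, tN.trans h, ht, ?_⟩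
      rw [Finset.sum_range_succ, ← Nat.succ_eq_add_one n, ← h]
      simpa using hs
    · refine ⟨N + 1, fun i => if i ≤ N then t i else u (n + 1), by simpa using t0, by simp, ?_, ?_⟩
      · intro i hi
        rcases Nat.lt_succ_iff_lt_or_eq.1 hi with hi | rfl
        · simpa [hi.le, Nat.succ_le_of_lt hi] using ht i hi
        · simpa [tN] using h
      · rw [Finset.sum_range_succ, Finset.sum_range_succ]
        refine add_le_add (hs.trans (le_of_eq (Finset.sum_congr rfl fun i hi => ?_))) ?_
        · have := Finset.mem_range.1 hi
          simp [this.le, Nat.succ_le_of_lt this]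
        · simp [tN]

lemma boundedVariationOn_of_hasFinite {f : ℝ → ℝ} (h : HasFinitePVariationOn f 1 0 1) :
    BoundedVariationOn f (Icc 0 1) := by
  obtain ⟨V, hV⟩ := h
  refine ne_top_of_le_ne_top (ENNReal.ofReal_ne_top (r := V)) ?_
  refine iSup_le ?_
  rintro ⟨n, u, hu, hus⟩
  -- The point `1` is appended as the last value, so that the partition reaches it.
  let v : ℕ → ℝ := fun i => if i ≤ n then u i else 1
  have hv : Monotone v := by
    intro i j hij
    simp only [v]
    split_ifs with h1 h2
    · exact hu hij
    · exact (hus i).2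
    · omega
    · exact le_rfl
  obtain ⟨N, t, t0, tN, ht, hs⟩ := exists_partition f v hv
    (fun i => by simp only [v]; split_ifs; exacts [(hus i).1, zero_le_one]) (n + 1)
  have := hV N t t0 (by simp [tN, v]) ht
  simp only [Real.rpow_one] at this
  have h2 : ∑ i ∈ Finset.range n, |f (u (i + 1)) - f (u i)| ≤ V := by
    refine le_trans ?_ (hs.trans this)
    rw [Finset.sum_range_succ]
    refine (le_of_eq (Finset.sum_congr rfl fun i hi => ?_)).trans
      (le_add_of_nonneg_right (abs_nonneg _))
    have := Finset.mem_range.1 hi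
    simp [v, this.le, Nat.succ_le_of_lt this]
  refine le_trans (le_of_eq ?_) (ENNReal.ofReal_le_ofReal h2)
  rw [ENNReal.ofReal_sum_of_nonneg (fun _ _ => abs_nonneg _)]
  simp only [edist_dist, Real.dist_eq]

lemma exists_control {f : ℝ → ℝ} (h : HasFinitePVariationOn f 1 0 1) :
    ∃ g : ℝ → ℝ, MonotoneOn g (Icc 0 1) ∧ ∀ s ∈ Icc (0 : ℝ) 1, ∀ t ∈ Icc (0 : ℝ) 1, s ≤ t →
      |f t - f s| ≤ g t - g s := by
  have hb := boundedVariationOn_of_hasFinite h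
  have hl := hb.locallyBoundedVariationOn
  have h0 : (0 : ℝ) ∈ Icc (0 : ℝ) 1 := ⟨le_rfl, zero_le_one⟩
  refine ⟨variationOnFromTo f (Icc 0 1) 0, variationOnFromTo.monotoneOn hl h0, ?_⟩
  intro s hs t ht hst
  rw [variationOnFromTo.sub_right hl h0 ht hs, variationOnFromTo.eq_of_le _ _ hst, ← Real.dist_eq]
  exact (hb.mono inter_subset_left).dist_le ⟨ht, hst, le_rfl⟩ ⟨hs, le_rfl, hst⟩

/-- The level-`k` dyadic point just below `t`. -/
noncomputable def dyad (k : ℕ) (t : ℝ) : ℝ := (⌊t * 2 ^ k⌋₊ : ℝ) / 2 ^ k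

lemma floor_le_pow {t : ℝ} (ht : t ∈ Icc (0 : ℝ) 1) (k : ℕ) : ⌊t * 2 ^ k⌋₊ ≤ 2 ^ k := by
  apply Nat.floor_le_of_le
  have : t * 2 ^ k ≤ 1 * 2 ^ k := by gcongr; exact ht.2
  simpa using this

lemma dyad_mem {t : ℝ} (ht : t ∈ Icc (0 : ℝ) 1) (k : ℕ) : dyad k t ∈ Icc (0 : ℝ) 1 := by
  refine ⟨by unfold dyad; positivity, ?_⟩
  rw [dyad, div_le_one (by positivity)]
  exact_mod_cast floor_le_pow ht k

lemma abs_sub_dyad_le {t : ℝ} (ht : 0 ≤ t) (k : ℕ) : |t - dyad k t| ≤ (1 / 2) ^ k := by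
  have h1 := Nat.floor_le (show 0 ≤ t * 2 ^ k by positivity)
  have h2 := Nat.lt_floor_add_one (t * 2 ^ k)
  have e : t - dyad k t = (t * 2 ^ k - ⌊t * 2 ^ k⌋₊) * (1 / 2) ^ k := by
    rw [dyad, one_div, inv_pow]; field_simp
  rw [e, abs_mul, abs_of_nonneg (by linarith), abs_of_nonneg (by positivity)]
  exact mul_le_of_le_one_left (by positivity) (by linarith)

/-- The pathwise part of the theorem: the dyadic limit exists, is continuous, and has finite
`1/q`-variation. -/
lemma path_regular {f g : ℝ → ℝ} {A q ρ : ℝ} (hA : 0 ≤ A) (hq : 0 < q) (hρ : 0 < ρ) (hρ1 : ρ < 1)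
    (hg : MonotoneOn g (Icc 0 1))
    (h : ∀ k j : ℕ, j < 2 ^ k → |f (((j + 1 : ℕ) : ℝ) / 2 ^ k) - f ((j : ℝ) / 2 ^ k)| ≤
      A * ρ ^ k * (g (((j + 1 : ℕ) : ℝ) / 2 ^ k) - g ((j : ℝ) / 2 ^ k)) ^ q)
    {F : ℝ → ℝ} (hF : ∀ t, F t = Filter.limUnder Filter.atTop (fun k => f (dyad k t))) :
    ContinuousOn F (Icc 0 1) ∧ HasFinitePVariationOn F (1 / q) 0 1 := by
  have hone : 0 < 1 - ρ := by linarith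
  have h0 : (0 : ℝ) ∈ Icc (0 : ℝ) 1 := ⟨le_rfl, zero_le_one⟩
  have h1 : (1 : ℝ) ∈ Icc (0 : ℝ) 1 := ⟨zero_le_one, le_rfl⟩
  have hG : 0 ≤ g 1 - g 0 := sub_nonneg.2 (hg h0 h1 zero_le_one)
  set c := 2 * A / (1 - ρ) * (g 1 - g 0) ^ q with hc
  have hc0 : 0 ≤ c := by have := Real.rpow_nonneg hG q; positivity
  have hlim : ∀ t ∈ Icc (0 : ℝ) 1, Filter.Tendsto (fun k => f (dyad k t)) Filter.atTop (nhds (F t)) := by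
    intro t ht
    rw [hF]
    apply CauchySeq.tendsto_limUnder
    refine cauchySeq_of_le_geometric ρ (c * ρ) hρ1 fun k => ?_
    rw [dist_comm, Real.dist_eq]
    have hp : 0 ≤ t * 2 ^ k := by have := ht.1; positivity
    have e : t * 2 ^ (k + 1) = 2 * (t * 2 ^ k) := by ring
    have hle : 2 * ⌊t * 2 ^ k⌋₊ ≤ ⌊t * 2 ^ (k + 1)⌋₊ := by
      apply Nat.le_floor
      push_cast
      rw [e]
      have := Nat.floor_le hp
      linarith
    have hlt : ⌊t * 2 ^ (k + 1)⌋₊ < 2 * ⌊t * 2 ^ k⌋₊ + 2 := by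
      rw [Nat.floor_lt (by rw [e]; positivity), e]
      push_cast
      have := Nat.lt_floor_add_one (t * 2 ^ k)
      linarith
    have key := dyadic_mod hA hq hρ hρ1 hg h (k + 1) 0 _ _ hle (floor_le_pow ht (k + 1))
      (by simp; omega)
    have e4 : ((2 * ⌊t * 2 ^ k⌋₊ : ℕ) : ℝ) / 2 ^ (k + 1) = dyad k t := by
      rw [dyad, pow_succ]; push_cast; field_simp
    simp only [add_zero] at key
    rw [e4] at key
    refine key.trans (le_of_eq ?_)
    rw [← hc]; ring
  -- At each level `m + d` with `d ≥ 1`, points at distance at most `2^{-m}/2` have dyadic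
  -- approximations at most `2^d` steps apart.
  have hmod : ∀ m : ℕ, ∀ s ∈ Icc (0 : ℝ) 1, ∀ t ∈ Icc (0 : ℝ) 1, s ≤ t → t - s ≤ (1 / 2) ^ (m + 1) →
      |F t - F s| ≤ c * ρ ^ m := by
    intro m s hs t ht hst hd
    refine le_of_tendsto ((hlim t ht).sub (hlim s hs)).abs ?_
    filter_upwards [Filter.eventually_ge_atTop (m + 1)] with k hk
    obtain ⟨d, rfl⟩ : ∃ d, k = m + (d + 1) := ⟨k - m - 1, by omega⟩
    refine dyadic_mod hA hq hρ hρ1 hg h m (d + 1) _ _ ?_ (floor_le_pow ht _) ?_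
    · exact Nat.floor_mono (by gcongr)
    · have h3 : t * 2 ^ (m + (d + 1)) ≤ s * 2 ^ (m + (d + 1)) + 2 ^ d := by
        have : (t - s) * 2 ^ (m + (d + 1)) ≤ (1 / 2) ^ (m + 1) * 2 ^ (m + (d + 1)) := by gcongr
        have e : ((1 : ℝ) / 2) ^ (m + 1) * 2 ^ (m + (d + 1)) = 2 ^ d := by
          rw [show m + (d + 1) = (m + 1) + d by ring, pow_add _ (m + 1), ← mul_assoc, ← mul_pow]
          norm_num
        rw [e] at this
        linarith
      have h4 := Nat.lt_floor_add_one (s * 2 ^ (m + (d + 1)))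
      have h5 : (1 : ℝ) ≤ 2 ^ d := one_le_pow₀ (by norm_num)
      apply Nat.floor_le_of_le
      push_cast
      rw [pow_succ 2 d]
      linarith
  constructor
  · rw [Metric.continuousOn_iff]
    intro t ht e he
    have hcm : Filter.Tendsto (fun m : ℕ => c * ρ ^ m) Filter.atTop (nhds 0) := by
      simpa using (tendsto_pow_atTop_nhds_zero_of_lt_one hρ.le hρ1).const_mul c
    obtain ⟨m, hm⟩ := (hcm.eventually (gt_mem_nhds he)).exists
    refine ⟨(1 / 2) ^ (m + 1), by positivity, fun s hs hst => lt_of_le_of_lt ?_ hm⟩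
    rw [Real.dist_eq] at hst ⊢
    rcases le_total s t with hle | hle
    · rw [abs_sub_comm] at hst ⊢
      exact hmod m s hs t ht hle ((le_abs_self _).trans hst.le)
    · exact hmod m t ht s hs hle ((le_abs_self _).trans hst.le)
  · refine ⟨(2 * A / (1 - ρ)) ^ (1 / q) * (g 1 - g 0), ?_⟩
    intro N t t0 tN ht
    have hmono : ∀ i j, i ≤ j → j ≤ N → t i ≤ t j := by
      intro i j hij
      induction j, hij using Nat.le_induction with
      | base => intro _; exact le_rfl
      | succ j _ ih => intro hj; exact (ih (by omega)).trans (ht j (by omega)).le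
    have hmem : ∀ i, i ≤ N → t i ∈ Icc (0 : ℝ) 1 := fun i hi =>
      ⟨t0 ▸ hmono 0 i (Nat.zero_le _) hi, tN ▸ hmono i N hi le_rfl⟩
    have hp : 0 < 1 / q := by positivity
    have hT : Filter.Tendsto
        (fun k => ∑ i ∈ Finset.range N, |f (dyad k (t (i + 1))) - f (dyad k (t i))| ^ (1 / q))
        Filter.atTop (nhds (∑ i ∈ Finset.range N, |F (t (i + 1)) - F (t i)| ^ (1 / q))) := by
      refine tendsto_finsetSum _ fun i hi => ?_
      have := Finset.mem_range.1 hi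
      exact (((hlim _ (hmem _ (by omega))).sub (hlim _ (hmem _ (by omega)))).abs).rpow_const
        (Or.inr hp.le)
    refine le_of_tendsto' hT fun k => ?_
    calc _ ≤ ∑ i ∈ Finset.range N, (2 * A / (1 - ρ)) ^ (1 / q) *
            (g (dyad k (t (i + 1))) - g (dyad k (t i))) := by
          refine Finset.sum_le_sum fun i hi => ?_
          have hi := Finset.mem_range.1 hi
          have hfl : ⌊t i * 2 ^ k⌋₊ ≤ ⌊t (i + 1) * 2 ^ k⌋₊ :=
            Nat.floor_mono (by gcongr; exact (ht i hi).le)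
          have key := dyadic_var hA hq hρ hρ1 hg h k _ _ hfl (floor_le_pow (hmem _ (by omega)) k)
          have hgm : g (dyad k (t i)) ≤ g (dyad k (t (i + 1))) :=
            hg (dyad_mem (hmem _ (by omega)) k) (dyad_mem (hmem _ (by omega)) k)
              (by unfold dyad; gcongr)
          have hgm' := sub_nonneg.2 hgm
          refine (Real.rpow_le_rpow (abs_nonneg _) key hp.le).trans (le_of_eq ?_)
          change (2 * A / (1 - ρ) * (g (dyad k (t (i + 1))) - g (dyad k (t i))) ^ q) ^ (1 / q) = _
          rw [Real.mul_rpow (by positivity) (Real.rpow_nonneg hgm' _), ← Real.rpow_mul hgm',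
            mul_one_div_cancel hq.ne', Real.rpow_one]
      _ = (2 * A / (1 - ρ)) ^ (1 / q) * (g (dyad k (t N)) - g (dyad k (t 0))) := by
          rw [← Finset.mul_sum, Finset.sum_range_sub (fun i => g (dyad k (t i)))]
      _ ≤ _ := by
          have a1 := dyad_mem (hmem N le_rfl) k
          have a0 := dyad_mem (hmem 0 (Nat.zero_le _)) k
          have b1 := hg a1 h1 a1.2
          have b0 := hg h0 a0 a0.1
          gcongr

/-- Recovers a bound on `a` from a bound on the quotient `a / b`; finiteness of the bound rules
out `a ≠ 0 = b`. -/
lemma bound_of_div {a b : ℝ} {n : ℕ} {q : ℝ} (hn : 0 < n) (ha : 0 ≤ a) (hb : 0 ≤ b) {S : ENNReal}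
    (hS : S ≠ ⊤)
    (h : ENNReal.ofReal (a ^ (n : ℝ)) / ENNReal.ofReal (b ^ (q * (n : ℝ))) ≤ S) :
    a ≤ S.toReal ^ (1 / (n : ℝ)) * b ^ q := by
  have hn' : (0 : ℝ) < n := by exact_mod_cast hn
  have h1 : ENNReal.ofReal (a ^ (n : ℝ)) ≤ S * ENNReal.ofReal (b ^ (q * (n : ℝ))) := by
    refine (ENNReal.div_le_iff_le_mul (Or.inr hS) (Or.inl ENNReal.ofReal_ne_top)).1 h
  rw [← ENNReal.ofReal_toReal hS, ← ENNReal.ofReal_mul ENNReal.toReal_nonneg,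
    ENNReal.ofReal_le_ofReal_iff (by positivity)] at h1
  have h2 := Real.rpow_le_rpow (by positivity) h1 (show 0 ≤ 1 / (n : ℝ) by positivity)
  rwa [← Real.rpow_mul ha, mul_one_div_cancel hn'.ne', Real.rpow_one,
    Real.mul_rpow ENNReal.toReal_nonneg (by positivity), ← Real.rpow_mul hb, mul_assoc,
    mul_one_div_cancel hn'.ne', mul_one] at h2

/-! ### The modification -/

/-- A version of the Kolmogorov–Čentsov continuity theorem: if `X` is a.s. of finite
variation and `r`-Hölder with constant `C` on `[0,1]`, and the `n`-th moments of the ratios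
`|M_t - M_s| / |X_t - X_s|^{1-ε}` are bounded by `K |t-s|^{rεn}` (with the convention
`|a|/0 = ∞` for `a ≠ 0` and `0/0 = 0`), then `M` admits a continuous modification whose
sample paths a.s. have finite `1/(1-ε)`-variation on `[0,1]`. -/
theorem kolmogorov_centsov_variation
    {Ω : Type*} {mΩ : MeasurableSpace Ω} (μ : Measure Ω) [IsProbabilityMeasure μ]
    (M X : ℝ → Ω → ℝ) (C r ε γ : ℝ) (n : ℕ)
    (hMmeas : ∀ t, Measurable (M t)) (hXmeas : ∀ t, Measurable (X t))
    (hC : 0 < C) (hr : 0 < r) (hε : ε ∈ Set.Ioo (0 : ℝ) 1)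
    (hγpos : 0 < γ) (hγ : γ < r * ε) (hn : 0 < n)
    (hn1 : 1 < (n : ℝ) * (r * ε - γ)) (hrn : 1 < r * (n : ℝ))
    (hX : ∀ᵐ ω ∂μ, HasFinitePVariationOn (fun t => X t ω) 1 0 1 ∧
      ∀ s ∈ Set.Icc (0 : ℝ) 1, ∀ t ∈ Set.Icc (0 : ℝ) 1,
        |X t ω - X s ω| ≤ C * |t - s| ^ r)
    (K : ℝ)
    (hM : ∀ s ∈ Set.Icc (0 : ℝ) 1, ∀ t ∈ Set.Icc (0 : ℝ) 1,
      ∫⁻ ω, ENNReal.ofReal (|M t ω - M s ω| ^ (n : ℝ)) /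
          ENNReal.ofReal (|X t ω - X s ω| ^ ((1 - ε) * (n : ℝ))) ∂μ
        ≤ ENNReal.ofReal (K * |t - s| ^ (r * ε * (n : ℝ)))) :
    ∃ M' : ℝ → Ω → ℝ,
      (∀ t ∈ Set.Icc (0 : ℝ) 1, ∀ᵐ ω ∂μ, M' t ω = M t ω) ∧
      ∀ᵐ ω ∂μ, ContinuousOn (fun t => M' t ω) (Set.Icc 0 1) ∧
        HasFinitePVariationOn (fun t => M' t ω) (1 / (1 - ε)) 0 1 := by
  obtain ⟨hε0, hε1⟩ := hε
  have hq : 0 < 1 - ε := by linarith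
  have hn' : (0 : ℝ) < n := by exact_mod_cast hn
  set q := 1 - ε with hqdef
  set Y : ℝ → ℝ → Ω → ENNReal := fun s t ω => ENNReal.ofReal (|M t ω - M s ω| ^ (n : ℝ)) /
          ENNReal.ofReal (|X t ω - X s ω| ^ (q * (n : ℝ))) with hY
  have hYm : ∀ s t, Measurable (Y s t) := by
    intro s t
    have h1 := hMmeas s
    have h2 := hMmeas t
    have h3 := hXmeas s
    have h4 := hXmeas t
    simp only [hY]
    fun_prop
  set α := r * ε * (n : ℝ) with hα
  have hα1 : 1 + γ * n < α := by rw [hα]; nlinarith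
  have hα0 : 0 < α := by have := mul_pos hγpos hn'; linarith
  -- The moment hypothesis at scale `2^{-k}`.
  have hYk : ∀ s ∈ Set.Icc (0 : ℝ) 1, ∀ t ∈ Set.Icc (0 : ℝ) 1, ∀ k : ℕ, |t - s| ≤ (1 / 2) ^ k →
      ∫⁻ ω, Y s t ω ∂μ ≤ ENNReal.ofReal (|K| * ((1 / 2 : ℝ) ^ α) ^ k) := by
    intro s hs t ht k hk
    refine (hM s hs t ht).trans (ENNReal.ofReal_le_ofReal ?_)
    have : |t - s| ^ α ≤ ((1 / 2 : ℝ) ^ α) ^ k := by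
      rw [Real.rpow_pow_comm (by norm_num)]
      exact Real.rpow_le_rpow (abs_nonneg _) hk hα0.le
    calc K * |t - s| ^ α ≤ |K| * |t - s| ^ α := by gcongr; exact le_abs_self K
      _ ≤ _ := by gcongr
  refine ⟨fun t ω => Filter.limUnder Filter.atTop (fun k => M (dyad k t) ω), ?_, ?_⟩
  · intro t ht
    have hfin : ∫⁻ ω, ∑' k, Y (dyad k t) t ω ∂μ ≠ ⊤ := by
      rw [lintegral_tsum fun k => (hYm _ _).aemeasurable]
      refine ne_top_of_le_ne_top ?_ (ENNReal.tsum_le_tsum fun k =>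
        hYk _ (dyad_mem ht k) t ht k (abs_sub_dyad_le ht.1 k))
      refine Summable.tsum_ofReal_ne_top ((summable_geometric_of_lt_one (by positivity) ?_).mul_left _)
      exact Real.rpow_lt_one (by norm_num) (by norm_num) hα0
    filter_upwards [hX, ae_lt_top (Measurable.tsum fun k => hYm (dyad k t) t) hfin]
      with ω hXω hSω
    apply Filter.Tendsto.limUnder_eq
    rw [tendsto_iff_dist_tendsto_zero]
    set S := ∑' k, Y (dyad k t) t ω with hS
    have hb : ∀ k, |M t ω - M (dyad k t) ω| ≤
        S.toReal ^ (1 / (n : ℝ)) * (C * ((1 / 2 : ℝ) ^ k) ^ r) ^ q := by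
      intro k
      refine (bound_of_div hn (abs_nonneg _) (abs_nonneg _) hSω.ne
        (ENNReal.le_tsum (f := fun k => Y (dyad k t) t ω) k)).trans ?_
      have h1 := hXω.2 _ (dyad_mem ht k) t ht
      have h2 := abs_sub_dyad_le ht.1 k
      gcongr
      refine h1.trans ?_
      gcongr
    have hz : Filter.Tendsto (fun k : ℕ => S.toReal ^ (1 / (n : ℝ)) *
        (C * ((1 / 2 : ℝ) ^ k) ^ r) ^ q) Filter.atTop (nhds 0) := by
      have h1 : Filter.Tendsto (fun k : ℕ => (1 / 2 : ℝ) ^ k) Filter.atTop (nhds 0) :=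
        tendsto_pow_atTop_nhds_zero_of_lt_one (by norm_num) (by norm_num)
      have h2 := h1.rpow_const (p := r) (Or.inr hr.le)
      have h3 := (h2.const_mul C).rpow_const (p := q) (Or.inr hq.le)
      have h4 := h3.const_mul (S.toReal ^ (1 / (n : ℝ)))
      rw [Real.zero_rpow hr.ne', mul_zero, Real.zero_rpow hq.ne', mul_zero] at h4
      exact h4
    refine squeeze_zero (fun _ => dist_nonneg) (fun k => ?_) hz
    rw [dist_comm, Real.dist_eq]
    exact hb k
  · set w : ℝ := (2 : ℝ) ^ (γ * n) with hw
    have hw0 : 0 < w := by positivity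
    set D : ℕ → ℕ → Ω → ENNReal := fun k j =>
      Y ((j : ℝ) / 2 ^ k) (((j + 1 : ℕ) : ℝ) / 2 ^ k) with hD
    have h01 : ∀ k i : ℕ, i ≤ 2 ^ k → (i : ℝ) / 2 ^ k ∈ Icc (0 : ℝ) 1 := by
      intro k i hi
      refine ⟨by positivity, ?_⟩
      rw [div_le_one (by positivity)]
      exact_mod_cast hi
    set T : ℕ → Ω → ENNReal := fun k ω =>
      ∑ j ∈ Finset.range (2 ^ k), ENNReal.ofReal (w ^ k) * D k j ω with hT
    have hTm : ∀ k, Measurable (T k) := fun k =>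
      Finset.measurable_sum _ fun j _ => (hYm _ _).const_mul _
    set θ : ℝ := 2 * w * (1 / 2 : ℝ) ^ α with hθ
    have hθ1 : θ < 1 := by
      have : θ = (2 : ℝ) ^ (1 + γ * n - α) := by
        rw [hθ, hw, Real.rpow_sub (by norm_num), Real.rpow_add (by norm_num), Real.rpow_one,
          one_div, Real.inv_rpow (by norm_num)]
        rfl
      rw [this]
      exact Real.rpow_lt_one_of_one_lt_of_neg (by norm_num) (by linarith)
    have hTint : ∀ k, ∫⁻ ω, T k ω ∂μ ≤ ENNReal.ofReal (|K| * θ ^ k) := by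
      intro k
      simp only [hT]
      rw [lintegral_finsetSum _ fun j _ => (hYm _ _).const_mul _]
      calc _ ≤ ∑ j ∈ Finset.range (2 ^ k), ENNReal.ofReal (w ^ k * (|K| * ((1 / 2 : ℝ) ^ α) ^ k)) := by
            refine Finset.sum_le_sum fun j hj => ?_
            have hj := Finset.mem_range.1 hj
            rw [lintegral_const_mul _ (hYm _ _), ENNReal.ofReal_mul (by positivity)]
            gcongr
            refine hYk _ (h01 k j hj.le) _ (h01 k (j + 1) hj) k (le_of_eq ?_)
            rw [← sub_div]
            push_cast
            rw [add_sub_cancel_left, abs_of_nonneg (by positivity), one_div_pow]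
        _ = _ := by
            rw [Finset.sum_const, Finset.card_range, nsmul_eq_mul,
              ← ENNReal.ofReal_natCast, ← ENNReal.ofReal_mul (by positivity)]
            congr 1
            push_cast
            rw [hθ, mul_pow, mul_pow]
            ring
    have hfin : ∫⁻ ω, ∑' k, T k ω ∂μ ≠ ⊤ := by
      rw [lintegral_tsum fun k => (hTm k).aemeasurable]
      refine ne_top_of_le_ne_top ?_ (ENNReal.tsum_le_tsum hTint)
      exact Summable.tsum_ofReal_ne_top
        ((summable_geometric_of_lt_one (by positivity) hθ1).mul_left _)
    filter_upwards [hX, ae_lt_top (Measurable.tsum hTm) hfin] with ω hXω hSω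
    obtain ⟨g, hg, hgX⟩ := exists_control hXω.1
    set S := ∑' k, T k ω with hS
    have hρ1 : (2 : ℝ) ^ (-γ) < 1 := Real.rpow_lt_one_of_one_lt_of_neg (by norm_num) (by linarith)
    refine path_regular (f := fun t => M t ω) (A := S.toReal ^ (1 / (n : ℝ))) (q := q)
      (ρ := (2 : ℝ) ^ (-γ)) (by positivity) hq (by positivity) hρ1 hg ?_ (fun t => rfl)
    intro k j hj
    have hwk : ENNReal.ofReal (w ^ k) ≠ 0 := by
      rw [Ne, ENNReal.ofReal_eq_zero, not_le]; positivity
    have hle : D k j ω ≤ S / ENNReal.ofReal (w ^ k) := by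
      rw [ENNReal.le_div_iff_mul_le (Or.inl hwk) (Or.inl ENNReal.ofReal_ne_top), mul_comm]
      refine le_trans ?_ (ENNReal.le_tsum (f := fun k => T k ω) k)
      exact Finset.single_le_sum (f := fun j => ENNReal.ofReal (w ^ k) * D k j ω)
        (fun _ _ => zero_le) (Finset.mem_range.2 hj)
    have hb := bound_of_div hn (abs_nonneg _) (abs_nonneg _)
      (ENNReal.div_ne_top hSω.ne hwk) hle
    have hx := hgX _ (h01 k j hj.le) _ (h01 k (j + 1) hj)
      (by gcongr; omega)
    refine hb.trans ?_
    have e : (S / ENNReal.ofReal (w ^ k)).toReal ^ (1 / (n : ℝ)) =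
        S.toReal ^ (1 / (n : ℝ)) * ((2 : ℝ) ^ (-γ)) ^ k := by
      rw [ENNReal.toReal_div, ENNReal.toReal_ofReal (by positivity),
        Real.div_rpow ENNReal.toReal_nonneg (by positivity), div_eq_mul_inv]
      congr 1
      have h2 : (0 : ℝ) ≤ 2 := by norm_num
      rw [← Real.rpow_natCast, ← Real.rpow_natCast, hw, ← Real.rpow_mul h2, ← Real.rpow_mul h2,
        ← Real.rpow_mul h2, ← Real.rpow_neg h2]
      congr 1
      field_simp
    rw [e]
    gcongr
end

section
/- Let ε ∈ (0,1), set q = 1/(1−ε), and let γ > 0 and θ > q − 1. There is a constant C depending only on q and θ such that the following holds. Let M : [0,1] → ℝ be continuous and X : [0,1] → ℝ be of finite variation, and let b ≥ 0 be such that for every integer m ≥ 0 and every integer 0 ≤ k < 2^m one has |M_{(k+1)/2^m} − M_{k/2^m}| ≤ b·2^{−γm}·|X_{(k+1)/2^m} − X_{k/2^m}|^{1−ε}. Then for every finite partition 0 = t_0 < t_1 < ... < t_N = 1, ∑_{i=0}^{N−1} |M_{t_{i+1}} − M_{t_i}|^q ≤ C·b^q·∑_{m=0}^∞ (m+1)^θ·2^{−γqm}·∑_{k=0}^{2^m−1}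 |X_{(k+1)/2^m} − X_{k/2^m}|. In particular, since X has finite variation, M has finite q-variation on [0,1]. -/
/-!
Fix an interval `[s, t]` of the partition and let `l n = ⌈s 2ⁿ⌉`, `r n = ⌊t 2ⁿ⌋` be the indices of
the outermost level-`n` dyadic points in it. Refining from level `n` to `n + 1` moves each of them
by at most one dyadic interval, so `|M (r n / 2ⁿ) - M (l n / 2ⁿ)|` is at most
`2 ∑_{m ≤ n} A m`, where `A m` bounds the increments of `M` over the level-`m` dyadic intervals
contained in `[s, t]` (`chain_bound`). Taking `A m` to be the `ℓ^q` norm of these increments and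
applying Hölder's inequality with the weights `(m + 1) ^ θ`, which costs a finite constant exactly
because `θ / (q - 1) > 1` (`holder_weight`), gives the estimate for one interval
(`interval_bound`).

Dyadic intervals contained in different partition intervals are different (`sum_disjoint`), so
summing over the partition recovers at most all the dyadic increments of each level. Continuity of
`M` lets `n → ∞` (`partition_bound`), and the hypothesis raised to the power `q = 1 / (1 - ε)`
turns increments of `M` into increments of `X`. The resulting series converges since the level-`m`
variation of `X` is bounded uniformly in `m` (`rhs_summable`).
-/

open MeasureTheory ENNReal

/-- The chaining step. If `l n` and `r n` index the outermost points of the grid `2⁻ⁿℤ` inside an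
interval, then passing from level `n` to `n + 1` adds at most one dyadic interval of length
`2⁻ⁿ⁻¹` at each end. At the first level with `l n ≤ r n` the two indices agree (or `n = 0`),
so at most two dyadic intervals of each level are used in total. -/
lemma chain_bound (M : ℝ → ℝ) (l r : ℕ → ℕ) (A : ℕ → ℝ) (hA : ∀ m, 0 ≤ A m)
    (hr0 : r 0 ≤ 1)
    (hr1 : ∀ n, 2 * r n ≤ r (n + 1)) (hr2 : ∀ n, r (n + 1) ≤ 2 * r n + 1)
    (hl1 : ∀ n, l (n + 1) ≤ 2 * l n) (hl2 : ∀ n, 2 * l n ≤ l (n + 1) + 1)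
    (hD : ∀ m k, l m ≤ k → k < r m →
      |M (((k : ℝ) + 1) / 2 ^ m) - M ((k : ℝ) / 2 ^ m)| ≤ A m) (n : ℕ) (hn : l n ≤ r n) :
    |M ((r n : ℝ) / 2 ^ n) - M ((l n : ℝ) / 2 ^ n)| ≤
      2 * ∑ m ∈ Finset.range (n + 1), A m := by
  induction n with
  | zero =>
    rcases Nat.eq_or_lt_of_le hn with h | h
    · rw [h]; simpa using hA 0
    · have h1 : r 0 = 1 := by omega
      have h2 : l 0 = 0 := by omega
      have := hD 0 0 (by omega) (by omega)
      have := hA 0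
      simp [h1, h2] at *
      linarith
  | succ n ih =>
    have hA' := hA (n + 1)
    have hS : 0 ≤ ∑ m ∈ Finset.range (n + 1), A m := Finset.sum_nonneg fun m _ => hA m
    rw [Finset.sum_range_succ]
    by_cases h : l n ≤ r n
    · have ih := ih h
      have e : ∀ j : ℕ, (j : ℝ) / 2 ^ n = ((2 * j : ℕ) : ℝ) / 2 ^ (n + 1) := by
        intro j; push_cast; rw [pow_succ]; field_simp
      have right : |M ((r (n + 1) : ℝ) / 2 ^ (n + 1)) - M ((r n : ℝ) / 2 ^ n)| ≤ A (n + 1) := by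
        rw [e]
        rcases Nat.eq_or_lt_of_le (hr1 n) with h' | h'
        · rw [h']; simpa using hA'
        · have h2 := hr2 n
          have h3 := hl1 n
          have := hD (n + 1) (2 * r n) (by omega) h'
          rw [show r (n + 1) = 2 * r n + 1 by omega]
          simpa using this
      have left : |M ((l n : ℝ) / 2 ^ n) - M ((l (n + 1) : ℝ) / 2 ^ (n + 1))| ≤ A (n + 1) := by
        rw [e]
        rcases Nat.eq_or_lt_of_le (hl1 n) with h' | h'
        · rw [h']; simpa using hA'
        · have h2 := hl2 n
          have h3 := hr1 n
          have := hD (n + 1) (l (n + 1)) le_rfl (by omega)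
          rw [show 2 * l n = l (n + 1) + 1 by omega]
          simpa using this
      rw [abs_le] at *
      constructor <;> linarith [ih.1, ih.2, left.1, left.2, right.1, right.2]
    · have h1 := hr2 n
      have h2 := hl2 n
      rw [show r (n + 1) = l (n + 1) by omega]
      simp only [sub_self, abs_zero]
      linarith

/-- Weighted Hölder inequality, with weights `(m + 1) ^ θ`; the constant is finite because
`θ / (q - 1) > 1`. -/
lemma holder_weight (q θ : ℝ) (hq : 1 < q) (hθ : q - 1 < θ) :
    ∃ K : ℝ, 0 < K ∧ ∀ (S : ℕ → ℝ), (∀ m, 0 ≤ S m) → ∀ n : ℕ,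
      (∑ m ∈ Finset.range n, S m ^ (1 / q)) ^ q ≤
        K * ∑ m ∈ Finset.range n, ((m : ℝ) + 1) ^ θ * S m := by
  have hq0 : 0 < q := by linarith
  have hq1 : 0 < q - 1 := by linarith
  have hs : Summable fun m : ℕ => ((m : ℝ) + 1) ^ (-(θ / (q - 1))) := by
    have h : Summable fun m : ℕ => (m : ℝ) ^ (-(θ / (q - 1))) := by
      rw [Real.summable_nat_rpow]
      have : 1 < θ / (q - 1) := by rw [lt_div_iff₀ hq1]; linarith
      linarith
    have := (summable_nat_add_iff 1).2 h
    simpa using this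
  have hpos : ∀ m : ℕ, 0 < ((m : ℝ) + 1) ^ (-(θ / (q - 1))) := fun m => by positivity
  refine ⟨(∑' m : ℕ, ((m : ℝ) + 1) ^ (-(θ / (q - 1)))) ^ (q - 1),
    Real.rpow_pos_of_pos (hs.tsum_pos (fun m => (hpos m).le) 0 (hpos 0)) _, ?_⟩
  intro S hS n
  have hc : (q / (q - 1)).HolderConjugate q := by
    rw [Real.holderConjugate_iff]
    constructor
    · rw [lt_div_iff₀ hq1]; linarith
    · field_simp; ring
  have key := Real.inner_le_Lp_mul_Lq_of_nonneg (Finset.range n) hc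
    (f := fun m : ℕ => ((m : ℝ) + 1) ^ (-(θ / q)))
    (g := fun m : ℕ => ((m : ℝ) + 1) ^ (θ / q) * S m ^ (1 / q))
    (fun m _ => by positivity)
    (fun m _ => mul_nonneg (by positivity) (Real.rpow_nonneg (hS m) _))
  have e1 : ∀ m : ℕ, ((m : ℝ) + 1) ^ (-(θ / q)) * (((m : ℝ) + 1) ^ (θ / q) * S m ^ (1 / q)) =
      S m ^ (1 / q) := by
    intro m
    rw [← mul_assoc, ← Real.rpow_add (by positivity)]
    simp
  have e2 : ∀ m : ℕ, (((m : ℝ) + 1) ^ (-(θ / q))) ^ (q / (q - 1)) =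
      ((m : ℝ) + 1) ^ (-(θ / (q - 1))) := by
    intro m
    rw [← Real.rpow_mul (by positivity)]
    congr 1
    field_simp
  have e3 : ∀ m : ℕ, (((m : ℝ) + 1) ^ (θ / q) * S m ^ (1 / q)) ^ q =
      ((m : ℝ) + 1) ^ θ * S m := by
    intro m
    rw [Real.mul_rpow (by positivity) (Real.rpow_nonneg (hS m) _),
      ← Real.rpow_mul (by positivity), ← Real.rpow_mul (hS m)]
    congr 1
    · congr 1; field_simp
    · rw [one_div_mul_cancel hq0.ne', Real.rpow_one]
  simp only [e1, e2, e3] at key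
  have hT : 0 ≤ ∑ m ∈ Finset.range n, ((m : ℝ) + 1) ^ θ * S m :=
    Finset.sum_nonneg fun m _ => mul_nonneg (by positivity) (hS m)
  have hU : 0 ≤ ∑ m ∈ Finset.range n, ((m : ℝ) + 1) ^ (-(θ / (q - 1))) :=
    Finset.sum_nonneg fun m _ => (hpos m).le
  calc (∑ m ∈ Finset.range n, S m ^ (1 / q)) ^ q
      ≤ ((∑ m ∈ Finset.range n, ((m : ℝ) + 1) ^ (-(θ / (q - 1)))) ^ (1 / (q / (q - 1))) *
          (∑ m ∈ Finset.range n, ((m : ℝ) + 1) ^ θ * S m) ^ (1 / q)) ^ q :=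
        Real.rpow_le_rpow (Finset.sum_nonneg fun m _ => Real.rpow_nonneg (hS m) _) key hq0.le
    _ = (∑ m ∈ Finset.range n, ((m : ℝ) + 1) ^ (-(θ / (q - 1)))) ^ (q - 1) *
          ∑ m ∈ Finset.range n, ((m : ℝ) + 1) ^ θ * S m := by
        rw [Real.mul_rpow (Real.rpow_nonneg hU _) (Real.rpow_nonneg hT _),
          ← Real.rpow_mul hU, ← Real.rpow_mul hT, one_div_mul_cancel hq0.ne', Real.rpow_one]
        congr 2
        field_simp
    _ ≤ _ := by
        gcongr
        exact hs.sum_le_tsum _ fun m _ => (hpos m).le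

/-- The bound for a single interval `[s, t]`, evaluated at the outermost level-`n` dyadic points
inside it: only dyadic intervals contained in `[s, t]` contribute. -/
lemma interval_bound (q θ K : ℝ) (hq : 1 < q)
    (hK : ∀ (S : ℕ → ℝ), (∀ m, 0 ≤ S m) → ∀ n : ℕ,
      (∑ m ∈ Finset.range n, S m ^ (1 / q)) ^ q ≤
        K * ∑ m ∈ Finset.range n, ((m : ℝ) + 1) ^ θ * S m)
    (M : ℝ → ℝ) (s t : ℝ) (hs : 0 ≤ s) (ht0 : 0 ≤ t) (ht : t ≤ 1) (n : ℕ)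
    (hn : ⌈s * 2 ^ n⌉₊ ≤ ⌊t * 2 ^ n⌋₊) :
    |M ((⌊t * 2 ^ n⌋₊ : ℝ) / 2 ^ n) - M ((⌈s * 2 ^ n⌉₊ : ℝ) / 2 ^ n)| ^ q ≤
      2 ^ q * K * ∑ m ∈ Finset.range (n + 1), ((m : ℝ) + 1) ^ θ *
        ∑ k ∈ Finset.Ico ⌈s * 2 ^ m⌉₊ ⌊t * 2 ^ m⌋₊,
          |M (((k : ℝ) + 1) / 2 ^ m) - M ((k : ℝ) / 2 ^ m)| ^ q := by
  have hq0 : 0 < q := by linarith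
  set S : ℕ → ℝ := fun m => ∑ k ∈ Finset.Ico ⌈s * 2 ^ m⌉₊ ⌊t * 2 ^ m⌋₊,
          |M (((k : ℝ) + 1) / 2 ^ m) - M ((k : ℝ) / 2 ^ m)| ^ q with hSdef
  have hS : ∀ m, 0 ≤ S m := fun m => Finset.sum_nonneg fun k _ => by positivity
  have hfl : ∀ m : ℕ, (⌊t * 2 ^ m⌋₊ : ℝ) ≤ t * 2 ^ m := fun m => Nat.floor_le (by positivity)
  have hfl' : ∀ m : ℕ, t * 2 ^ m < (⌊t * 2 ^ m⌋₊ : ℝ) + 1 := fun m => Nat.lt_floor_add_one _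
  have hce : ∀ m : ℕ, s * 2 ^ m ≤ (⌈s * 2 ^ m⌉₊ : ℝ) := fun m => Nat.le_ceil _
  have hce' : ∀ m : ℕ, (⌈s * 2 ^ m⌉₊ : ℝ) < s * 2 ^ m + 1 := fun m =>
    Nat.ceil_lt_add_one (by positivity)
  have h := chain_bound M (fun m => ⌈s * 2 ^ m⌉₊) (fun m => ⌊t * 2 ^ m⌋₊)
    (fun m => S m ^ (1 / q)) (fun m => Real.rpow_nonneg (hS m) _)
    (by
      have := hfl 0
      simp only [pow_zero, mul_one] at this ⊢
      exact_mod_cast this.trans ht)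
    (fun m => Nat.le_floor (by have := hfl m; push_cast; rw [pow_succ]; linarith))
    (fun m => by
      have h1 := hfl (m + 1)
      have h2 := hfl' m
      rw [pow_succ] at h1
      have : (⌊t * 2 ^ (m + 1)⌋₊ : ℝ) < 2 * (⌊t * 2 ^ m⌋₊ : ℝ) + 2 := by
        rw [pow_succ]; linarith
      have : ⌊t * 2 ^ (m + 1)⌋₊ < 2 * ⌊t * 2 ^ m⌋₊ + 2 := by exact_mod_cast this
      omega)
    (fun m => Nat.ceil_le.2 (by have := hce m; push_cast; rw [pow_succ]; linarith))
    (fun m => by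
      have h1 := hce (m + 1)
      have h2 := hce' m
      rw [pow_succ] at h1
      have : 2 * (⌈s * 2 ^ m⌉₊ : ℝ) < (⌈s * 2 ^ (m + 1)⌉₊ : ℝ) + 2 := by
        rw [pow_succ]; linarith
      have : 2 * ⌈s * 2 ^ m⌉₊ < ⌈s * 2 ^ (m + 1)⌉₊ + 2 := by exact_mod_cast this
      omega)
    (fun m k h1 h2 => by
      have : |M (((k : ℝ) + 1) / 2 ^ m) - M ((k : ℝ) / 2 ^ m)| ^ q ≤ S m :=
        Finset.single_le_sum
          (f := fun k : ℕ => |M (((k : ℝ) + 1) / 2 ^ m) - M ((k : ℝ) / 2 ^ m)| ^ q)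
          (fun k _ => by positivity) (Finset.mem_Ico.2 ⟨h1, h2⟩)
      rw [one_div]
      exact (Real.le_rpow_inv_iff_of_pos (abs_nonneg _) (hS m) hq0).2 this)
    n hn
  have hsum : 0 ≤ ∑ m ∈ Finset.range (n + 1), S m ^ (1 / q) :=
    Finset.sum_nonneg fun m _ => Real.rpow_nonneg (hS m) _
  calc _ ≤ (2 * ∑ m ∈ Finset.range (n + 1), S m ^ (1 / q)) ^ q :=
        Real.rpow_le_rpow (abs_nonneg _) h hq0.le
    _ = 2 ^ q * (∑ m ∈ Finset.range (n + 1), S m ^ (1 / q)) ^ q :=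
        Real.mul_rpow (by norm_num) hsum
    _ ≤ 2 ^ q * (K * ∑ m ∈ Finset.range (n + 1), ((m : ℝ) + 1) ^ θ * S m) := by
        gcongr
        exact hK S hS (n + 1)
    _ = _ := by ring

/-- Dyadic intervals contained in different intervals of a partition are different. -/
lemma sum_disjoint (f : ℕ → ℝ) (hf : ∀ k, 0 ≤ f k) (N : ℕ) (t : ℕ → ℝ) (h0 : t 0 = 0)
    (hN : t N = 1) (ht : ∀ i, i < N → t i < t (i + 1)) (m : ℕ) :
    ∑ i ∈ Finset.range N, ∑ k ∈ Finset.Ico ⌈t i * 2 ^ m⌉₊ ⌊t (i + 1) * 2 ^ m⌋₊, f k ≤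
      ∑ k ∈ Finset.range (2 ^ m), f k := by
  have key : ∀ j ≤ N,
      ∑ i ∈ Finset.range j, ∑ k ∈ Finset.Ico ⌈t i * 2 ^ m⌉₊ ⌊t (i + 1) * 2 ^ m⌋₊, f k ≤
        ∑ k ∈ Finset.range ⌈t j * 2 ^ m⌉₊, f k := by
    intro j
    induction j with
    | zero => intro _; simp [h0]
    | succ j ih =>
      intro hj
      have hle : ⌈t j * 2 ^ m⌉₊ ≤ ⌈t (j + 1) * 2 ^ m⌉₊ :=
        Nat.ceil_mono (by have := ht j (by omega); gcongr)
      rw [Finset.sum_range_succ, ← Finset.sum_range_add_sum_Ico _ hle]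
      refine add_le_add (ih (by omega)) ?_
      refine Finset.sum_le_sum_of_subset_of_nonneg ?_ fun k _ _ => hf k
      exact Finset.Ico_subset_Ico_right (Nat.floor_le_ceil _)
  have := key N le_rfl
  rw [hN, one_mul] at this
  have e : ⌈(2 : ℝ) ^ m⌉₊ = 2 ^ m := by exact_mod_cast Nat.ceil_natCast (R := ℝ) (2 ^ m)
  rwa [e] at this

lemma tendsto_floor_dyadic (t : ℝ) (ht : 0 ≤ t) :
    Filter.Tendsto (fun n : ℕ => (⌊t * 2 ^ n⌋₊ : ℝ) / 2 ^ n) Filter.atTop (nhds t) :=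
  (tendsto_nat_floor_mul_div_atTop ht).comp (tendsto_pow_atTop_atTop_of_one_lt (one_lt_two))

lemma tendsto_ceil_dyadic (t : ℝ) (ht : 0 ≤ t) :
    Filter.Tendsto (fun n : ℕ => (⌈t * 2 ^ n⌉₊ : ℝ) / 2 ^ n) Filter.atTop (nhds t) :=
  (tendsto_nat_ceil_mul_div_atTop ht).comp (tendsto_pow_atTop_atTop_of_one_lt (one_lt_two))

/-- Partition sums of `M` are limits of their dyadic approximations, each of which is controlled
by finitely many levels. -/
lemma partition_bound (q θ K : ℝ) (hq : 1 < q) (hK0 : 0 < K)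
    (hK : ∀ (S : ℕ → ℝ), (∀ m, 0 ≤ S m) → ∀ n : ℕ,
      (∑ m ∈ Finset.range n, S m ^ (1 / q)) ^ q ≤
        K * ∑ m ∈ Finset.range n, ((m : ℝ) + 1) ^ θ * S m)
    (M : ℝ → ℝ) (hM : ContinuousOn M (Set.Icc 0 1)) (N : ℕ) (t : ℕ → ℝ) (h0 : t 0 = 0)
    (hN : t N = 1) (ht : ∀ i, i < N → t i < t (i + 1)) (B : ℝ)
    (hB : ∀ n, 2 ^ q * K * ∑ m ∈ Finset.range n, ((m : ℝ) + 1) ^ θ *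
        ∑ k ∈ Finset.range (2 ^ m),
          |M (((k : ℝ) + 1) / 2 ^ m) - M ((k : ℝ) / 2 ^ m)| ^ q ≤ B) :
    ∑ i ∈ Finset.range N, |M (t (i + 1)) - M (t i)| ^ q ≤ B := by
  have hq0 : 0 < q := by linarith
  have hge : ∀ i, i ≤ N → 0 ≤ t i := by
    intro i
    induction i with
    | zero => intro _; rw [h0]
    | succ i ih => intro hi; linarith [ih (by omega), ht i (by omega)]
  have hle : ∀ j i, i + j = N → t i ≤ 1 := by
    intro j
    induction j with
    | zero => intro i hi; rw [← hN, ← hi, add_zero]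
    | succ j ih => intro i hi; linarith [ih (i + 1) (by omega), ht i (by omega)]
  have hle' : ∀ i, i ≤ N → t i ≤ 1 := fun i hi => hle (N - i) i (by omega)
  have hcont : ∀ (u : ℕ → ℝ) (a : ℝ), a ∈ Set.Icc (0 : ℝ) 1 →
      Filter.Tendsto u Filter.atTop (nhds a) → (∀ n, u n ∈ Set.Icc (0 : ℝ) 1) →
      Filter.Tendsto (fun n => M (u n)) Filter.atTop (nhds (M a)) := by
    intro u a ha hu hu'
    exact (hM a ha).tendsto.comp
      (tendsto_nhdsWithin_iff.2 ⟨hu, Filter.Eventually.of_forall hu'⟩)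
  have hlim : Filter.Tendsto (fun n : ℕ => ∑ i ∈ Finset.range N,
      |M ((⌊t (i + 1) * 2 ^ n⌋₊ : ℝ) / 2 ^ n) - M ((⌈t i * 2 ^ n⌉₊ : ℝ) / 2 ^ n)| ^ q)
      Filter.atTop (nhds (∑ i ∈ Finset.range N, |M (t (i + 1)) - M (t i)| ^ q)) := by
    refine tendsto_finsetSum _ fun i hi => ?_
    have hi := Finset.mem_range.1 hi
    refine Filter.Tendsto.rpow_const (Filter.Tendsto.abs (Filter.Tendsto.sub ?_ ?_))
      (Or.inr hq0.le)
    · refine hcont _ _ ⟨hge _ hi, hle' _ hi⟩ (tendsto_floor_dyadic _ (hge _ hi)) fun n => ?_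
      have h1 := hge _ hi
      refine ⟨by positivity, ?_⟩
      rw [div_le_one (by positivity)]
      refine (Nat.floor_le (by positivity)).trans ?_
      have := hle' _ hi
      exact mul_le_of_le_one_left (by positivity) this
    · refine hcont _ _ ⟨hge _ hi.le, hle' _ hi.le⟩ (tendsto_ceil_dyadic _ (hge _ hi.le))
        fun n => ?_
      refine ⟨by positivity, ?_⟩
      rw [div_le_one (by positivity)]
      have : ⌈t i * 2 ^ n⌉₊ ≤ 2 ^ n := Nat.ceil_le.2 (by
        push_cast
        exact mul_le_of_le_one_left (by positivity) (hle' _ hi.le))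
      exact_mod_cast this
  refine le_of_tendsto hlim ?_
  have hev : ∀ᶠ n : ℕ in Filter.atTop, ∀ i ∈ Finset.range N,
      ⌈t i * 2 ^ n⌉₊ ≤ ⌊t (i + 1) * 2 ^ n⌋₊ := by
    rw [Filter.eventually_all_finset]
    intro i hi
    have hi := Finset.mem_range.1 hi
    filter_upwards [(tendsto_ceil_dyadic _ (hge _ hi.le)).eventually_lt
      (tendsto_floor_dyadic _ (hge _ hi)) (ht i hi)] with n hn
    rw [div_lt_div_iff_of_pos_right (by positivity)] at hn
    exact_mod_cast hn.le
  filter_upwards [hev] with n hn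
  refine le_trans ?_ (hB (n + 1))
  calc _ ≤ ∑ i ∈ Finset.range N, 2 ^ q * K * ∑ m ∈ Finset.range (n + 1), ((m : ℝ) + 1) ^ θ *
        ∑ k ∈ Finset.Ico ⌈t i * 2 ^ m⌉₊ ⌊t (i + 1) * 2 ^ m⌋₊,
          |M (((k : ℝ) + 1) / 2 ^ m) - M ((k : ℝ) / 2 ^ m)| ^ q :=
        Finset.sum_le_sum fun i hi => by
          have hi' := Finset.mem_range.1 hi
          exact interval_bound q θ K hq hK M _ _ (hge _ hi'.le) (hge _ hi') (hle' _ hi') n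
            (hn i hi)
    _ = 2 ^ q * K * ∑ m ∈ Finset.range (n + 1), ((m : ℝ) + 1) ^ θ * ∑ i ∈ Finset.range N,
        ∑ k ∈ Finset.Ico ⌈t i * 2 ^ m⌉₊ ⌊t (i + 1) * 2 ^ m⌋₊,
          |M (((k : ℝ) + 1) / 2 ^ m) - M ((k : ℝ) / 2 ^ m)| ^ q := by
        rw [← Finset.mul_sum, Finset.sum_comm]
        simp only [Finset.mul_sum]
    _ ≤ _ := by
        gcongr with m hm
        exact sum_disjoint
          (fun k : ℕ => |M (((k : ℝ) + 1) / 2 ^ m) - M ((k : ℝ) / 2 ^ m)| ^ q)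
          (fun k => by positivity) N t h0 hN ht m

/-- Finite variation of `X` makes the right-hand side of the estimate a convergent series. -/
lemma rhs_summable (X : ℝ → ℝ) (hX : HasFinitePVariationOn X 1 0 1) (θ c : ℝ) (hc : 0 < c) :
    Summable fun m : ℕ => ((m : ℝ) + 1) ^ θ * (2 : ℝ) ^ (-(c * (m : ℝ))) *
      ∑ k ∈ Finset.range (2 ^ m), |X (((k : ℝ) + 1) / 2 ^ m) - X ((k : ℝ) / 2 ^ m)| := by
  obtain ⟨V, hV⟩ := hX
  have hV' : ∀ m : ℕ, ∑ k ∈ Finset.range (2 ^ m),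
      |X (((k : ℝ) + 1) / 2 ^ m) - X ((k : ℝ) / 2 ^ m)| ≤ V := by
    intro m
    have := hV (2 ^ m) (fun i => (i : ℝ) / 2 ^ m) (by simp) (by simp)
      (fun i _ => by push_cast; gcongr; linarith)
    simpa using this
  obtain ⟨d, hd⟩ := exists_nat_ge θ
  have hr : (2 : ℝ) ^ (-c) < 1 := Real.rpow_lt_one_of_one_lt_of_neg one_lt_two (by linarith)
  have hr0 : (0 : ℝ) < 2 ^ (-c) := by positivity
  have h1 : Summable fun m : ℕ => ((m : ℝ) + 1) ^ d * ((2 : ℝ) ^ (-c)) ^ m := by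
    have h := summable_pow_mul_geometric_of_norm_lt_one (R := ℝ) d (r := (2 : ℝ) ^ (-c))
      (by rwa [Real.norm_of_nonneg hr0.le])
    have h := ((summable_nat_add_iff 1).2 h).mul_left ((2 : ℝ) ^ (-c))⁻¹
    refine h.congr fun m => ?_
    push_cast
    rw [pow_succ]
    field_simp
  refine Summable.of_nonneg_of_le (fun m => by positivity) (fun m => ?_) (h1.mul_right V)
  have e : (2 : ℝ) ^ (-(c * (m : ℝ))) = ((2 : ℝ) ^ (-c)) ^ m := by
    rw [← Real.rpow_natCast, ← Real.rpow_mul (by norm_num)]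
    congr 1; ring
  rw [e]
  have e2 : ((m : ℝ) + 1) ^ θ ≤ ((m : ℝ) + 1) ^ d := by
    rw [← Real.rpow_natCast]
    exact Real.rpow_le_rpow_of_exponent_le (by linarith [Nat.cast_nonneg (α := ℝ) m]) hd
  gcongr
  exact hV' m

/-- Deterministic chaining estimate: for `ε ∈ (0,1)`, `q = 1/(1-ε)` and `θ > q - 1`
there is a constant `C = C(q,θ)` such that for every `γ > 0`, every continuous `M`,
every finite-variation `X` and every `b ≥ 0` controlling the dyadic increments of `M`
by those of `X` as below, every partition sum `∑ |M(t_{i+1}) - M(t_i)|^q` is bounded by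
`C b^q ∑_{m=0}^∞ (m+1)^θ 2^{-γqm} ∑_{k<2^m} |X((k+1)/2^m) - X(k/2^m)|`; in particular
`M` has finite `q`-variation on `[0,1]`. -/
theorem chaining_estimate (ε θ : ℝ) (hε : ε ∈ Set.Ioo (0 : ℝ) 1)
    (hθ : 1 / (1 - ε) - 1 < θ) :
    ∃ C : ℝ, 0 < C ∧ ∀ γ : ℝ, 0 < γ → ∀ (M X : ℝ → ℝ) (b : ℝ), 0 ≤ b →
      ContinuousOn M (Set.Icc 0 1) →
      HasFinitePVariationOn X 1 0 1 →
      (∀ (m k : ℕ), k < 2 ^ m →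
        |M (((k : ℝ) + 1) / 2 ^ m) - M ((k : ℝ) / 2 ^ m)| ≤
          b * (2 : ℝ) ^ (-(γ * (m : ℝ))) *
            |X (((k : ℝ) + 1) / 2 ^ m) - X ((k : ℝ) / 2 ^ m)| ^ (1 - ε)) →
      (∀ (N : ℕ) (t : ℕ → ℝ), t 0 = 0 → t N = 1 →
        (∀ i, i < N → t i < t (i + 1)) →
        ENNReal.ofReal
            (∑ i ∈ Finset.range N, |M (t (i + 1)) - M (t i)| ^ (1 / (1 - ε))) ≤
          ENNReal.ofReal (C * b ^ (1 / (1 - ε))) *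
            ∑' m : ℕ, ENNReal.ofReal
              (((m : ℝ) + 1) ^ θ * (2 : ℝ) ^ (-(γ * (1 / (1 - ε)) * (m : ℝ))) *
                ∑ k ∈ Finset.range (2 ^ m),
                  |X (((k : ℝ) + 1) / 2 ^ m) - X ((k : ℝ) / 2 ^ m)|)) ∧
      HasFinitePVariationOn M (1 / (1 - ε)) 0 1 := by
  have hε' : 0 < 1 - ε := by linarith [hε.2]
  have hεq : (1 - ε) * (1 / (1 - ε)) = 1 := by field_simp
  have hq : 1 < 1 / (1 - ε) := by rw [lt_div_iff₀ hε']; linarith [hε.1]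
  generalize 1 / (1 - ε) = q at *
  have hq0 : 0 < q := by linarith
  obtain ⟨K, hK0, hK⟩ := holder_weight q θ hq hθ
  refine ⟨2 ^ q * K, by positivity, ?_⟩
  intro γ hγ M X b hb hM hX hMX
  have hsum := rhs_summable X hX θ (γ * q) (by positivity)
  set R : ℕ → ℝ := fun m => ((m : ℝ) + 1) ^ θ * (2 : ℝ) ^ (-(γ * q * (m : ℝ))) *
    ∑ k ∈ Finset.range (2 ^ m), |X (((k : ℝ) + 1) / 2 ^ m) - X ((k : ℝ) / 2 ^ m)| with hR
  have hR0 : ∀ m, 0 ≤ R m := fun m => by positivity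
  -- The hypothesis raised to the power `q`: the exponent of the increment of `X` becomes one.
  have hMX' : ∀ m k : ℕ, k < 2 ^ m →
      |M (((k : ℝ) + 1) / 2 ^ m) - M ((k : ℝ) / 2 ^ m)| ^ q ≤
        b ^ q * ((2 : ℝ) ^ (-(γ * q * (m : ℝ))) *
          |X (((k : ℝ) + 1) / 2 ^ m) - X ((k : ℝ) / 2 ^ m)|) := by
    intro m k hk
    refine (Real.rpow_le_rpow (abs_nonneg _) (hMX m k hk) hq0.le).trans_eq ?_
    rw [Real.mul_rpow (by positivity) (by positivity), Real.mul_rpow hb (by positivity),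
      ← Real.rpow_mul (by norm_num), ← Real.rpow_mul (abs_nonneg _), hεq, Real.rpow_one,
      mul_assoc]
    congr 3
    ring
  have main : ∀ (N : ℕ) (t : ℕ → ℝ), t 0 = 0 → t N = 1 → (∀ i, i < N → t i < t (i + 1)) →
      ∑ i ∈ Finset.range N, |M (t (i + 1)) - M (t i)| ^ q ≤
        2 ^ q * K * b ^ q * ∑' m, R m := by
    intro N t h0 hN ht
    refine partition_bound q θ K hq hK0 hK M hM N t h0 hN ht _ fun n => ?_
    rw [mul_assoc _ (b ^ q)]
    gcongr
    refine le_trans ?_ (mul_le_mul_of_nonneg_left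
      (hsum.sum_le_tsum (Finset.range n) fun m _ => hR0 m) (by positivity))
    rw [Finset.mul_sum]
    refine Finset.sum_le_sum fun m _ => ?_
    calc _ ≤ ((m : ℝ) + 1) ^ θ * ∑ k ∈ Finset.range (2 ^ m),
          b ^ q * ((2 : ℝ) ^ (-(γ * q * (m : ℝ))) *
          |X (((k : ℝ) + 1) / 2 ^ m) - X ((k : ℝ) / 2 ^ m)|) := by
          gcongr with k hk
          exact hMX' m k (Finset.mem_range.1 hk)
      _ = _ := by
          rw [hR, ← Finset.mul_sum, ← Finset.mul_sum]
          ring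
  refine ⟨fun N t h0 hN ht => ?_, _, main⟩
  rw [← ENNReal.ofReal_tsum_of_nonneg hR0 hsum, ← ENNReal.ofReal_mul (by positivity)]
  exact ENNReal.ofReal_le_ofReal (main N t h0 hN ht)
end

section
/- Let (Ω, ℱ, (ℱ_t)_{t∈[0,T]}, P) be a filtered probability space and let (M_t)_{t∈[0,T]} be a continuous martingale with respect to (ℱ_t). Suppose that for some ε ∈ (0,1), almost surely the sample path t ↦ M_t has finite (1+ε)-variation on [0,T], i.e. the supremum over all finite partitions 0 = t_0 < t_1 < ... < t_N = T of ∑_{i=0}^{N−1} |M_{t_{i+1}} − M_{t_i}|^{1+ε} is finite. Then almost surely M_t = M_0 for all t ∈ [0,T]. -/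
/-! The proof discretises `[0,T]` and never uses continuous-time stopping, nor square integrability
of `M`. It suffices to show `M T = M 0` a.s.: conditioning on `ℱ t` then gives `M t = M 0` a.s. for
each `t`, and path continuity gives it for all `t` at once.

For a discrete martingale `X` let `Good k` (`GoodEvent X K η k`) be the event that up to time `k`
the path stays within `K` of `X 0` and has sum of squared increments at most `η`. The events
decrease in `k`. Expanding `(X (k+1) - X 0)²` on `Good (k+1)`, the cross term has mean zero over
`Good k`, so besides the squared increments, whose sum on the good events is at most `η`, only the
increment at which the path leaves the good events contributes
(`integral_good_succ_le`). That exit increment is either at most `δ`, or lies in the event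
`B` that some increment exceeds `δ`, where the martingale property dominates it by
`K + |X N - X 0|` in the mean. Telescoping yields (`integral_good_le`)
`∫_{Good N} (X N - X 0)² ≤ η + 2K (δ + ∫_B (K + |X N - X 0|))`.

Apply this to `M` on finer and finer grids. Path continuity makes `B` shrink to a null set, and
finite `(1+ε)`-variation with `1 + ε < 2` makes the sum of squares tend to `0`. Hence
`∫_H (M T - M 0)² ≤ η + 2Kδ` for all `η, δ > 0`, where `H` is the event that the path
stays within `K` of `M 0` on all grids; these events exhaust `Ω` up to a null set as `K → ∞`. -/

open MeasureTheory

/-! ### An `L²` estimate for discrete martingales -/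

section Discrete

variable {Ω : Type*} {m0 : MeasurableSpace Ω}

/-- The event that up to time `k` the process `X` has stayed within `K` of `X 0` and its
sum of squared increments is at most `η`. -/
def GoodEvent (X : ℕ → Ω → ℝ) (K η : ℝ) (k : ℕ) : Set Ω :=
  {ω | (∀ j ≤ k, |X j ω - X 0 ω| ≤ K) ∧
    ∑ j ∈ Finset.range k, (X (j + 1) ω - X j ω) ^ 2 ≤ η}

lemma goodEvent_succ_subset (X : ℕ → Ω → ℝ) (K η : ℝ) (k : ℕ) :
    GoodEvent X K η (k + 1) ⊆ GoodEvent X K η k := by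
  rintro ω ⟨h1, h2⟩
  refine ⟨fun j hj => h1 j (by omega), le_trans ?_ h2⟩
  rw [Finset.sum_range_succ]
  nlinarith [sq_nonneg (X (k + 1) ω - X k ω)]

lemma sum_indicator_goodEvent_le (X : ℕ → Ω → ℝ) (K η : ℝ) (hη : 0 ≤ η) (N : ℕ) (ω : Ω) :
    ∑ k ∈ Finset.range N, (GoodEvent X K η (k + 1)).indicator
      (fun ω => (X (k + 1) ω - X k ω) ^ 2) ω ≤ η := by
  induction N with
  | zero => simpa using hη
  | succ N ih =>
    by_cases h : ω ∈ GoodEvent X K η (N + 1)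
    · refine le_trans (Finset.sum_le_sum fun k _ => ?_) h.2
      exact Set.indicator_le_self' (fun _ _ => sq_nonneg _) ω
    · rw [Finset.sum_range_succ, Set.indicator_of_notMem h, add_zero]
      exact ih

variable {μ : Measure Ω} {𝒢 : Filtration ℕ m0} {X : ℕ → Ω → ℝ}

lemma measurableSet_goodEvent (hX : Martingale X 𝒢 μ) (K η : ℝ) (k : ℕ) :
    MeasurableSet[𝒢 k] (GoodEvent X K η k) := by
  have hm : ∀ j ≤ k, Measurable[𝒢 k] (X j) := fun j hj =>
    ((hX.stronglyMeasurable j).mono (𝒢.mono hj)).measurable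
  have h0 := hm 0 (Nat.zero_le _)
  have e : GoodEvent X K η k = (⋂ j ∈ Finset.range (k + 1), {ω | |X j ω - X 0 ω| ≤ K}) ∩
      {ω | ∑ j ∈ Finset.range k, (X (j + 1) ω - X j ω) ^ 2 ≤ η} := by
    ext ω
    simp [GoodEvent]
  rw [e]
  refine MeasurableSet.inter (Finset.measurableSet_biInter _ fun j hj => ?_) ?_
  · have hj' := hm j (by simpa [Nat.lt_succ_iff] using hj)
    exact measurableSet_le (continuous_abs.measurable.comp (hj'.sub h0)) measurable_const
  · refine measurableSet_le (Finset.measurable_fun_sum _ fun j hj => ?_) measurable_const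
    have hj := Finset.mem_range.1 hj
    exact ((hm _ hj).sub (hm _ hj.le)).pow_const 2

lemma measurableSet_exists_large_increment (hX : Martingale X 𝒢 μ) (δ : ℝ) (N : ℕ) :
    MeasurableSet {ω | ∃ i < N, δ < |X (i + 1) ω - X i ω|} := by
  have hm : ∀ j, Measurable (X j) := fun j =>
    ((hX.stronglyMeasurable j).mono (𝒢.le j)).measurable
  have e : {ω | ∃ i < N, δ < |X (i + 1) ω - X i ω|} =
      ⋃ i ∈ Finset.range N, {ω | δ < |X (i + 1) ω - X i ω|} := by
    ext ω; simp
  rw [e]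
  exact Finset.measurableSet_biUnion _ fun i _ =>
    measurableSet_lt measurable_const ((hm (i + 1)).sub (hm i)).abs

variable [IsProbabilityMeasure μ]

/-- The cross term is centred over `Good k`: there `X k - X 0` is bounded and determined by the past,
so it is orthogonal to the next martingale increment. -/
lemma setIntegral_mul_increment_eq_zero (hX : Martingale X 𝒢 μ) (K η : ℝ) (k : ℕ) :
    Integrable ((GoodEvent X K η k).indicator
        fun ω => (X k ω - X 0 ω) * (X (k + 1) ω - X k ω)) μ ∧
      ∫ ω in GoodEvent X K η k, (X k ω - X 0 ω) * (X (k + 1) ω - X k ω) ∂μ = 0 := by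
  have hG := measurableSet_goodEvent hX K η k
  set g : Ω → ℝ := (GoodEvent X K η k).indicator fun ω => X k ω - X 0 ω with hg
  have hgm : StronglyMeasurable[𝒢 k] g :=
    ((hX.stronglyMeasurable k).sub
      ((hX.stronglyMeasurable 0).mono (𝒢.mono (Nat.zero_le k)))).indicator hG
  have hD : Integrable (X (k + 1) - X k) μ := (hX.integrable _).sub (hX.integrable _)
  have hgb : ∀ ω, ‖g ω‖ ≤ |K| := by
    intro ω
    by_cases h : ω ∈ GoodEvent X K η k
    · rw [hg, Set.indicator_of_mem h, Real.norm_eq_abs]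
      exact (h.1 k le_rfl).trans (le_abs_self K)
    · rw [hg, Set.indicator_of_notMem h]; simp
  have hint : Integrable (g * (X (k + 1) - X k)) μ :=
    hD.bdd_mul (hgm.mono (𝒢.le k)).aestronglyMeasurable (Filter.Eventually.of_forall hgb)
  have e : (GoodEvent X K η k).indicator (fun ω => (X k ω - X 0 ω) * (X (k + 1) ω - X k ω)) =
      g * (X (k + 1) - X k) := by
    ext ω
    by_cases h : ω ∈ GoodEvent X K η k <;> simp [hg, h]
  refine ⟨e ▸ hint, ?_⟩
  rw [← integral_indicator (𝒢.le k _ hG), e, ← integral_condExp (𝒢.le k)]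
  have h1 := condExp_mul_of_stronglyMeasurable_left hgm hint hD
  have h2 : μ[X (k + 1) - X k | 𝒢 k] =ᵐ[μ] 0 := by
    have h3 := hX.condExp_ae_eq (Nat.le_succ k)
    have h4 := hX.condExp_ae_eq (le_refl k)
    filter_upwards [condExp_sub (hX.integrable (k + 1)) (hX.integrable k) (𝒢 k), h3, h4]
      with ω a b c
    rw [a]; simp [b, c]
  refine integral_eq_zero_of_ae ?_
  filter_upwards [h1, h2] with ω a b
  rw [a]; simp [b]

lemma integrableOn_goodEvent_sq (hX : Martingale X 𝒢 μ) (K η : ℝ) (k : ℕ) :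
    IntegrableOn (fun ω => (X k ω - X 0 ω) ^ 2) (GoodEvent X K η k) μ := by
  refine Measure.integrableOn_of_bounded (M := K ^ 2) (measure_ne_top _ _)
    (((hX.integrable k).sub (hX.integrable 0)).aestronglyMeasurable.pow 2) ?_
  refine (ae_restrict_iff' (𝒢.le k _ (measurableSet_goodEvent hX K η k))).2
    (Filter.Eventually.of_forall fun ω h => ?_)
  have := h.1 k le_rfl
  rw [Real.norm_eq_abs, abs_pow]
  gcongr

lemma integrableOn_goodEvent_increment_sq (hX : Martingale X 𝒢 μ) (K η : ℝ) (k : ℕ) :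
    IntegrableOn (fun ω => (X (k + 1) ω - X k ω) ^ 2) (GoodEvent X K η (k + 1)) μ := by
  refine Measure.integrableOn_of_bounded (M := η) (measure_ne_top _ _)
    (((hX.integrable (k + 1)).sub (hX.integrable k)).aestronglyMeasurable.pow 2) ?_
  refine (ae_restrict_iff' (𝒢.le _ _ (measurableSet_goodEvent hX K η (k + 1)))).2
    (Filter.Eventually.of_forall fun ω h => ?_)
  rw [Real.norm_eq_abs, abs_of_nonneg (sq_nonneg _)]
  refine le_trans ?_ h.2
  exact Finset.single_le_sum (f := fun j => (X (j + 1) ω - X j ω) ^ 2)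
    (fun j _ => sq_nonneg _) (Finset.self_mem_range_succ k)

/-- One step of the `L²` recursion: besides the squared increment, only the increment at which the
path leaves the good events contributes, because the cross term is centred over `Good k`. -/
lemma integral_good_succ_le (hX : Martingale X 𝒢 μ) (K η : ℝ) (k : ℕ) :
    ∫ ω in GoodEvent X K η (k + 1), (X (k + 1) ω - X 0 ω) ^ 2 ∂μ ≤
      ∫ ω in GoodEvent X K η k, (X k ω - X 0 ω) ^ 2 ∂μ +
      ∫ ω in GoodEvent X K η (k + 1), (X (k + 1) ω - X k ω) ^ 2 ∂μ +
      2 * K * ∫ ω in GoodEvent X K η k \ GoodEvent X K η (k + 1), |X (k + 1) ω - X k ω| ∂μ := by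
  obtain ⟨hc, hc0⟩ := setIntegral_mul_increment_eq_zero hX K η k
  have hG := 𝒢.le _ _ (measurableSet_goodEvent hX K η k)
  have hG' := 𝒢.le _ _ (measurableSet_goodEvent hX K η (k + 1))
  have hD : Integrable (fun ω => |X (k + 1) ω - X k ω|) μ :=
    ((hX.integrable (k + 1)).sub (hX.integrable k)).abs
  have i1 := (integrableOn_goodEvent_sq hX K η k).integrable_indicator hG
  have i2 := (integrableOn_goodEvent_increment_sq hX K η k).integrable_indicator hG'
  have i3 := (hD.indicator (hG.diff hG')).const_mul (2 * K)
  have i4 := hc.const_mul 2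
  have i5 := (integrableOn_goodEvent_sq hX K η (k + 1)).integrable_indicator hG'
  rw [← integral_indicator hG] at hc0
  rw [← integral_indicator hG, ← integral_indicator hG', ← integral_indicator hG',
    ← integral_indicator (hG.diff hG'), ← integral_const_mul]
  have e := integral_add (i1.add i2) (i3.add i4)
  have e1 := integral_add i1 i2
  have e2 := integral_add i3 i4
  have e3 : ∫ ω, 2 * (GoodEvent X K η k).indicator
      (fun ω => (X k ω - X 0 ω) * (X (k + 1) ω - X k ω)) ω ∂μ = 0 := by
    rw [integral_const_mul, hc0, mul_zero]
  have key := integral_mono i5 ((i1.add i2).add (i3.add i4)) (fun ω => by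
    by_cases h' : ω ∈ GoodEvent X K η (k + 1)
    · have h := goodEvent_succ_subset X K η k h'
      simp only [Pi.add_apply, Set.indicator_of_mem h', Set.indicator_of_mem h]
      rw [Set.indicator_of_notMem (fun hh => hh.2 h')]
      apply le_of_eq
      ring
    · by_cases h : ω ∈ GoodEvent X K η k
      · simp only [Pi.add_apply, Set.indicator_of_notMem h', Set.indicator_of_mem h]
        rw [Set.indicator_of_mem (Set.mem_sdiff_of_mem h h')]
        have h1 := h.1 k le_rfl
        have h2 : |(X k ω - X 0 ω) * (X (k + 1) ω - X k ω)| ≤ K * |X (k + 1) ω - X k ω| := by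
          rw [abs_mul]; gcongr
        nlinarith [neg_abs_le ((X k ω - X 0 ω) * (X (k + 1) ω - X k ω)),
          sq_nonneg (X k ω - X 0 ω)]
      · simp only [Pi.add_apply, Set.indicator_of_notMem h', Set.indicator_of_notMem h]
        rw [Set.indicator_of_notMem (fun hh => h hh.1)]
        simp)
  simp only [Pi.add_apply] at e e1 e2 key
  linarith

/-- The increment with which the path leaves the good events is at most `δ` outside `B`; on `B` it
is at most `K + |X (k+1) - X 0|`, which the martingale property bounds by the terminal value. -/
lemma integral_exit_increment_le (hX : Martingale X 𝒢 μ) (K η δ : ℝ) (hK : 0 ≤ K) (hδ : 0 ≤ δ)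
    (N k : ℕ) (hk : k < N) :
    ∫ ω in GoodEvent X K η k \ GoodEvent X K η (k + 1), |X (k + 1) ω - X k ω| ∂μ ≤
      ∫ ω in GoodEvent X K η k \ GoodEvent X K η (k + 1),
        (δ + {ω | ∃ i < N, δ < |X (i + 1) ω - X i ω|}.indicator
          (fun ω => K + |X N ω - X 0 ω|) ω) ∂μ := by
  have hEm : MeasurableSet[𝒢 (k + 1)] (GoodEvent X K η k \ GoodEvent X K η (k + 1)) :=
    ((𝒢.mono (Nat.le_succ k)) _ (measurableSet_goodEvent hX K η k)).diff
      (measurableSet_goodEvent hX K η (k + 1))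
  have hB := measurableSet_exists_large_increment hX δ N
  set E := GoodEvent X K η k \ GoodEvent X K η (k + 1) with hE
  set B := {ω | ∃ i < N, δ < |X (i + 1) ω - X i ω|} with hBdef
  have hAm : MeasurableSet[𝒢 (k + 1)] (E ∩ {ω | δ < |X (k + 1) ω - X k ω|}) := by
    refine MeasurableSet.inter hEm (measurableSet_lt measurable_const
      (continuous_abs.measurable.comp ?_))
    exact (hX.stronglyMeasurable (k + 1)).measurable.sub
      ((hX.stronglyMeasurable k).mono (𝒢.mono (Nat.le_succ k))).measurable
  set A := E ∩ {ω | δ < |X (k + 1) ω - X k ω|} with hA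
  have hE0 := 𝒢.le _ _ hEm
  have hA0 := 𝒢.le _ _ hAm
  have ix : ∀ j, Integrable (fun ω => |X j ω - X 0 ω|) μ := fun j =>
    ((hX.integrable j).sub (hX.integrable 0)).abs
  have iD : Integrable (fun ω => |X (k + 1) ω - X k ω|) μ :=
    ((hX.integrable (k + 1)).sub (hX.integrable k)).abs
  have iK : ∀ j, Integrable (fun ω => K + |X j ω - X 0 ω|) μ := fun j =>
    (integrable_const K).add (ix j)
  have iδ : Integrable (E.indicator fun _ => δ) μ := (integrable_const δ).indicator hE0
  -- The terminal value dominates `X (k+1) - X 0` in the mean on the `𝒢 (k+1)`-event `A`.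
  have hdom : ∫ ω in A, |X (k + 1) ω - X 0 ω| ∂μ ≤ ∫ ω in A, |X N ω - X 0 ω| ∂μ := by
    have hc : μ[X N - X 0 | 𝒢 (k + 1)] =ᵐ[μ] X (k + 1) - X 0 := by
      have h3 := hX.condExp_ae_eq (Nat.succ_le_of_lt hk)
      have h4 : μ[X 0 | 𝒢 (k + 1)] = X 0 := condExp_of_stronglyMeasurable (𝒢.le _)
        ((hX.stronglyMeasurable 0).mono (𝒢.mono (Nat.zero_le _))) (hX.integrable 0)
      filter_upwards [condExp_sub (hX.integrable N) (hX.integrable 0) (𝒢 (k + 1)), h3] with ω a b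
      rw [a, Pi.sub_apply, Pi.sub_apply, h4, b]
    have := setIntegral_abs_condExp_le (μ := μ) hAm (X N - X 0)
    refine le_trans (le_of_eq ?_) this
    refine integral_congr_ae (ae_restrict_of_ae ?_)
    filter_upwards [hc] with ω a
    rw [a, Pi.sub_apply]
  have s1 : ∫ ω in E, |X (k + 1) ω - X k ω| ∂μ ≤
      ∫ ω, E.indicator (fun _ => δ) ω ∂μ + ∫ ω in A, (K + |X (k + 1) ω - X 0 ω|) ∂μ := by
    rw [← integral_indicator hE0, ← integral_indicator hA0,
      ← integral_add iδ ((iK (k + 1)).indicator hA0)]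
    refine integral_mono (iD.indicator hE0) (iδ.add ((iK (k + 1)).indicator hA0)) fun ω => ?_
    dsimp only
    by_cases h : ω ∈ E
    · rw [Set.indicator_of_mem h, Set.indicator_of_mem h]
      by_cases h' : ω ∈ A
      · rw [Set.indicator_of_mem h']
        have h1 := h.1.1 k le_rfl
        have h2 : |X (k + 1) ω - X k ω| ≤ |X (k + 1) ω - X 0 ω| + |X k ω - X 0 ω| := by
          have := abs_sub (X (k + 1) ω - X 0 ω) (X k ω - X 0 ω)
          rwa [sub_sub_sub_cancel_right] at this
        linarith
      · rw [Set.indicator_of_notMem h', add_zero]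
        by_contra h2
        exact h' ⟨h, not_le.1 h2⟩
    · rw [Set.indicator_of_notMem h, Set.indicator_of_notMem h,
        Set.indicator_of_notMem (fun hh => h hh.1), add_zero]
  have s2 : ∫ ω in A, (K + |X (k + 1) ω - X 0 ω|) ∂μ ≤ ∫ ω in A, (K + |X N ω - X 0 ω|) ∂μ := by
    rw [integral_add (integrable_const K).integrableOn (ix (k + 1)).integrableOn,
      integral_add (integrable_const K).integrableOn (ix N).integrableOn]
    linarith
  have s3 : ∫ ω, E.indicator (fun _ => δ) ω ∂μ + ∫ ω in A, (K + |X N ω - X 0 ω|) ∂μ ≤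
      ∫ ω in E, (δ + B.indicator (fun ω => K + |X N ω - X 0 ω|) ω) ∂μ := by
    have iB := (iK N).indicator hB
    rw [← integral_indicator hA0, ← integral_add iδ ((iK N).indicator hA0),
      ← integral_indicator hE0]
    refine integral_mono (iδ.add ((iK N).indicator hA0))
      (((integrable_const δ).add iB).indicator hE0) fun ω => ?_
    dsimp only
    by_cases h : ω ∈ E
    · rw [Set.indicator_of_mem h, Set.indicator_of_mem h]
      by_cases h' : ω ∈ A
      · have hb : ω ∈ B := ⟨k, hk, h'.2⟩
        rw [Set.indicator_of_mem h', Set.indicator_of_mem hb]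
      · rw [Set.indicator_of_notMem h']
        have := Set.indicator_nonneg (s := B) (f := fun ω => K + |X N ω - X 0 ω|)
          (fun _ _ => by positivity) ω
        linarith
    · rw [Set.indicator_of_notMem h, Set.indicator_of_notMem h,
        Set.indicator_of_notMem (fun hh => h hh.1), add_zero]
  linarith

lemma integral_good_le (hX : Martingale X 𝒢 μ) (K η δ : ℝ) (hK : 0 ≤ K) (hη : 0 ≤ η)
    (hδ : 0 ≤ δ) (N : ℕ) :
    ∫ ω in GoodEvent X K η N, (X N ω - X 0 ω) ^ 2 ∂μ ≤
      η + 2 * K * (δ + ∫ ω, {ω | ∃ i < N, δ < |X (i + 1) ω - X i ω|}.indicator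
          (fun ω => K + |X N ω - X 0 ω|) ω ∂μ) := by
  have hB := measurableSet_exists_large_increment hX δ N
  have hG : ∀ k, MeasurableSet (GoodEvent X K η k) := fun k =>
    𝒢.le _ _ (measurableSet_goodEvent hX K η k)
  have hexit := integral_exit_increment_le hX K η δ hK hδ N
  set B := {ω | ∃ i < N, δ < |X (i + 1) ω - X i ω|} with hBdef
  have iB : Integrable (B.indicator fun ω => K + |X N ω - X 0 ω|) μ :=
    ((integrable_const K).add ((hX.integrable N).sub (hX.integrable 0)).abs).indicator hB
  have ig : Integrable (fun ω => δ + B.indicator (fun ω => K + |X N ω - X 0 ω|) ω) μ :=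
    (integrable_const δ).add iB
  have gnn : ∀ ω, 0 ≤ δ + B.indicator (fun ω => K + |X N ω - X 0 ω|) ω := fun ω =>
    add_nonneg hδ (Set.indicator_nonneg (fun _ _ => by positivity) ω)
  have eg : ∫ ω, (δ + B.indicator (fun ω => K + |X N ω - X 0 ω|) ω) ∂μ =
      δ + ∫ ω, B.indicator (fun ω => K + |X N ω - X 0 ω|) ω ∂μ := by
    rw [integral_add (integrable_const δ) iB]; simp
  rw [← eg]
  set g := fun ω => δ + B.indicator (fun ω => K + |X N ω - X 0 ω|) ω with hg
  have hsq : ∑ k ∈ Finset.range N,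
      ∫ ω in GoodEvent X K η (k + 1), (X (k + 1) ω - X k ω) ^ 2 ∂μ ≤ η := by
    simp_rw [← integral_indicator (hG _)]
    have hi := fun k => (integrableOn_goodEvent_increment_sq hX K η k).integrable_indicator (hG _)
    rw [← integral_finsetSum _ fun k _ => hi k]
    calc _ ≤ ∫ _, η ∂μ := integral_mono (integrable_finsetSum _ fun k _ => hi k)
          (integrable_const η) (fun ω => sum_indicator_goodEvent_le X K η hη N ω)
      _ = η := by simp
  have hrec : ∀ n ≤ N, ∫ ω in GoodEvent X K η n, (X n ω - X 0 ω) ^ 2 ∂μ ≤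
      ∑ k ∈ Finset.range n, ∫ ω in GoodEvent X K η (k + 1), (X (k + 1) ω - X k ω) ^ 2 ∂μ +
      2 * K * (∫ ω in GoodEvent X K η 0, g ω ∂μ - ∫ ω in GoodEvent X K η n, g ω ∂μ) := by
    intro n
    induction n with
    | zero => simp
    | succ n ih =>
      intro hn
      have h1 := ih (by omega)
      have h2 := integral_good_succ_le hX K η n
      have h3 := hexit n hn
      have h4 := setIntegral_sdiff (hG (n + 1)) ig.integrableOn (goodEvent_succ_subset X K η n)
      rw [h4] at h3
      rw [Finset.sum_range_succ]
      nlinarith [mul_le_mul_of_nonneg_left h3 hK]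
  have h5 : ∫ ω in GoodEvent X K η 0, g ω ∂μ ≤ ∫ ω, g ω ∂μ :=
    setIntegral_le_integral ig (Filter.Eventually.of_forall gnn)
  have h6 : 0 ≤ ∫ ω in GoodEvent X K η N, g ω ∂μ := integral_nonneg gnn
  have h7 := hrec N le_rfl
  nlinarith [mul_le_mul_of_nonneg_left (sub_le_sub h5 h6) hK]

end Discrete

/-! ### Uniform grids and path regularity -/

/-- The `i`-th point of the uniform grid with `n + 1` steps on `[0,T]`, constant equal to `T` from
`i = n + 1` on. -/
noncomputable def gridPoint (T : ℝ) (n i : ℕ) : ℝ := min (i * (T / (n + 1))) T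

lemma gridPoint_mem {T : ℝ} (hT : 0 < T) (n i : ℕ) : gridPoint T n i ∈ Set.Icc 0 T :=
  ⟨le_min (by positivity) hT.le, min_le_right _ _⟩

lemma gridPoint_zero {T : ℝ} (hT : 0 < T) (n : ℕ) : gridPoint T n 0 = 0 := by
  simp [gridPoint, hT.le]

lemma gridPoint_last (T : ℝ) (n : ℕ) : gridPoint T n (n + 1) = T := by
  have : ((n : ℝ) + 1) ≠ 0 := by positivity
  simp [gridPoint, mul_div_cancel₀ _ this]

lemma gridPoint_mono {T : ℝ} (hT : 0 < T) (n : ℕ) : Monotone (gridPoint T n) := by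
  intro i j h
  unfold gridPoint
  gcongr

lemma gridPoint_eq {T : ℝ} (hT : 0 < T) {n i : ℕ} (h : i ≤ n + 1) :
    gridPoint T n i = i * (T / (n + 1)) := by
  refine min_eq_left ?_
  have h1 : (i : ℝ) ≤ n + 1 := by exact_mod_cast h
  calc (i : ℝ) * (T / (n + 1)) ≤ (n + 1) * (T / (n + 1)) := by gcongr
    _ = T := by field_simp

lemma gridPoint_succ_sub {T : ℝ} (hT : 0 < T) {n i : ℕ} (h : i < n + 1) :
    gridPoint T n (i + 1) - gridPoint T n i = T / (n + 1) := by
  rw [gridPoint_eq hT h, gridPoint_eq hT h.le]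
  push_cast
  ring

/-- Uniform continuity along the grids. -/
lemma eventually_grid_increment_le {f : ℝ → ℝ} {T : ℝ} (hT : 0 < T)
    (hf : ContinuousOn f (Set.Icc 0 T)) {δ : ℝ} (hδ : 0 < δ) :
    ∀ᶠ n : ℕ in Filter.atTop, ∀ i < n + 1,
      |f (gridPoint T n (i + 1)) - f (gridPoint T n i)| ≤ δ := by
  obtain ⟨r, hr, h⟩ := Metric.uniformContinuousOn_iff.1
    (isCompact_Icc.uniformContinuousOn_of_continuous hf) δ hδ
  have ht : Filter.Tendsto (fun n : ℕ => T / ((n : ℝ) + 1)) Filter.atTop (nhds 0) := by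
    simpa [div_eq_mul_inv] using tendsto_one_div_add_atTop_nhds_zero_nat.const_mul T
  filter_upwards [ht.eventually_lt_const hr] with n hn i hi
  refine (h _ (gridPoint_mem hT n (i + 1)) _ (gridPoint_mem hT n i) ?_).le
  rw [Real.dist_eq, gridPoint_succ_sub hT hi, abs_of_pos (by positivity)]
  exact hn

/-- A continuous path of finite `(1+ε)`-variation with `ε < 1` has vanishing quadratic variation:
the sum of squares is at most `(max |increment|)^(1-ε)` times the `(1+ε)`-variation. -/
lemma eventually_grid_sq_le {f : ℝ → ℝ} {T ε : ℝ} (hT : 0 < T) (hε : ε ∈ Set.Ioo (0 : ℝ) 1)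
    (hf : ContinuousOn f (Set.Icc 0 T)) (hv : HasFinitePVariationOn f (1 + ε) 0 T)
    {η : ℝ} (hη : 0 < η) :
    ∀ᶠ n : ℕ in Filter.atTop, ∑ i ∈ Finset.range (n + 1),
      (f (gridPoint T n (i + 1)) - f (gridPoint T n i)) ^ 2 ≤ η := by
  obtain ⟨V, hV⟩ := hv
  have h1 : 0 < 1 - ε := sub_pos.2 hε.2
  -- With this `δ`, `δ ^ (1 - ε) * |V| ≤ η`.
  set δ : ℝ := (η / (|V| + 1)) ^ (1 - ε)⁻¹ with hδdef
  have hδ : 0 < δ := by positivity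
  have hδη : δ ^ (1 - ε) * |V| ≤ η := by
    rw [hδdef, Real.rpow_inv_rpow (by positivity) h1.ne', div_mul_eq_mul_div,
      div_le_iff₀ (by positivity)]
    nlinarith
  filter_upwards [eventually_grid_increment_le hT hf hδ] with n hn
  have hs := hV (n + 1) (gridPoint T n) (gridPoint_zero hT n) (gridPoint_last T n) (fun i hi => by
    have h2 := gridPoint_succ_sub hT hi
    have h3 : 0 < T / ((n : ℝ) + 1) := by positivity
    linarith)
  calc _ ≤ ∑ i ∈ Finset.range (n + 1), δ ^ (1 - ε) *
        |f (gridPoint T n (i + 1)) - f (gridPoint T n i)| ^ (1 + ε) := by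
        refine Finset.sum_le_sum fun i hi => ?_
        have h4 := hn i (Finset.mem_range.1 hi)
        set d := f (gridPoint T n (i + 1)) - f (gridPoint T n i)
        have h5 : d ^ 2 = |d| ^ (1 - ε) * |d| ^ (1 + ε) := by
          rw [← Real.rpow_add_of_nonneg (abs_nonneg d) h1.le (by linarith [hε.1]), ← sq_abs,
            ← Real.rpow_natCast]
          norm_num
        rw [h5]
        gcongr
    _ = δ ^ (1 - ε) * ∑ i ∈ Finset.range (n + 1),
        |f (gridPoint T n (i + 1)) - f (gridPoint T n i)| ^ (1 + ε) := by rw [Finset.mul_sum]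
    _ ≤ δ ^ (1 - ε) * |V| := by gcongr; exact hs.trans (le_abs_self V)
    _ ≤ η := hδη

/-! ### The continuous-time statement -/

section Continuous

variable {Ω : Type*} {m0 : MeasurableSpace Ω} {μ : Measure Ω} [IsProbabilityMeasure μ]

/-- The restriction of a filtration to a uniform grid. -/
noncomputable def gridFiltration (ℱ : Filtration ℝ m0) {T : ℝ} (hT : 0 < T) (n : ℕ) :
    Filtration ℕ m0 where
  seq i := ℱ (gridPoint T n i)
  mono' _ _ h := ℱ.mono (gridPoint_mono hT n h)
  le' _ := ℱ.le _

/-- On the event that the path stays within `K` of its starting point on all grids, the terminal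
value agrees with the initial one. -/
lemma ae_eq_of_grid_bounded
    (ℱ : Filtration ℝ m0) (T ε : ℝ) (hT : 0 < T) (hε : ε ∈ Set.Ioo (0 : ℝ) 1)
    (M : ℝ → Ω → ℝ)
    (hadapt : ∀ t ∈ Set.Icc (0 : ℝ) T, StronglyMeasurable[ℱ t] (M t))
    (hint : ∀ t ∈ Set.Icc (0 : ℝ) T, Integrable (M t) μ)
    (hmart : ∀ s ∈ Set.Icc (0 : ℝ) T, ∀ t ∈ Set.Icc (0 : ℝ) T, s ≤ t →
      μ[M t | ℱ s] =ᵐ[μ] M s)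
    (hcont : ∀ᵐ ω ∂μ, ContinuousOn (fun u => M u ω) (Set.Icc 0 T))
    (hvar : ∀ᵐ ω ∂μ, HasFinitePVariationOn (fun u => M u ω) (1 + ε) 0 T)
    (K : ℝ) (hK : 0 ≤ K) :
    ∀ᵐ ω ∂μ, (∀ n i, |M (gridPoint T n i) ω - M 0 ω| ≤ K) → M T ω = M 0 ω := by
  have hX : ∀ n, Martingale (fun i => M (gridPoint T n i)) (gridFiltration ℱ hT n) μ := fun n =>
    ⟨fun i => hadapt _ (gridPoint_mem hT n i), fun i j hij =>
      hmart _ (gridPoint_mem hT n i) _ (gridPoint_mem hT n j) (gridPoint_mono hT n hij)⟩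
  have h0 : (0 : ℝ) ∈ Set.Icc 0 T := ⟨le_rfl, hT.le⟩
  have hTT : T ∈ Set.Icc 0 T := ⟨hT.le, le_rfl⟩
  have hmeas : ∀ t ∈ Set.Icc (0 : ℝ) T, Measurable (M t) := fun t ht =>
    ((hadapt t ht).mono (ℱ.le t)).measurable
  set H : Set Ω := {ω | ∀ n i, |M (gridPoint T n i) ω - M 0 ω| ≤ K} with hH
  have hHm : MeasurableSet H := by
    have e : H = ⋂ n, ⋂ i, {ω | |M (gridPoint T n i) ω - M 0 ω| ≤ K} := by
      ext ω; simp [hH]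
    rw [e]
    exact MeasurableSet.iInter fun n => MeasurableSet.iInter fun i =>
      measurableSet_le ((hmeas _ (gridPoint_mem hT n i)).sub (hmeas 0 h0)).abs measurable_const
  have hHT : ∀ ω ∈ H, |M T ω - M 0 ω| ≤ K := fun ω h => by
    simpa [gridPoint_last] using h 0 1
  have hWm : Measurable fun ω => (M T ω - M 0 ω) ^ 2 := ((hmeas T hTT).sub (hmeas 0 h0)).pow_const 2
  have hWH : IntegrableOn (fun ω => (M T ω - M 0 ω) ^ 2) H μ := by
    refine Measure.integrableOn_of_bounded (M := K ^ 2) (measure_ne_top _ _)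
      hWm.aestronglyMeasurable ((ae_restrict_iff' hHm).2 (Filter.Eventually.of_forall fun ω h => ?_))
    have := hHT ω h
    rw [Real.norm_eq_abs, abs_pow]
    gcongr
  have hbound : ∀ η > 0, ∀ δ > 0, ∫ ω in H, (M T ω - M 0 ω) ^ 2 ∂μ ≤ η + 2 * K * (δ + 0) := by
    intro η hη δ hδ
    set G : ℕ → Set Ω := fun n => GoodEvent (fun i => M (gridPoint T n i)) K η (n + 1) with hGdef
    set B : ℕ → Set Ω := fun n => {ω | ∃ i < n + 1,
      δ < |M (gridPoint T n (i + 1)) ω - M (gridPoint T n i) ω|} with hBdef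
    have hG : ∀ n, MeasurableSet (G n) := fun n =>
      (gridFiltration ℱ hT n).le _ _ (measurableSet_goodEvent (hX n) K η (n + 1))
    have hB : ∀ n, MeasurableSet (B n) := fun n =>
      measurableSet_exists_large_increment (hX n) δ (n + 1)
    have iW : Integrable (fun ω => K + |M T ω - M 0 ω|) μ :=
      (integrable_const K).add ((hint T hTT).sub (hint 0 h0)).abs
    have hle : ∀ n, ∫ ω in H ∩ G n, (M T ω - M 0 ω) ^ 2 ∂μ ≤
        η + 2 * K * (δ + ∫ ω, (B n).indicator (fun ω => K + |M T ω - M 0 ω|) ω ∂μ) := by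
      intro n
      have h1 := integral_good_le (hX n) K η δ hK hη.le hδ.le (n + 1)
      have h2 := integrableOn_goodEvent_sq (hX n) K η (n + 1)
      simp only [gridPoint_last, gridPoint_zero hT] at h1 h2
      exact (setIntegral_mono_set h2 (Filter.Eventually.of_forall fun _ => sq_nonneg _)
        (Filter.Eventually.of_forall (Set.inter_subset_right (s := H)))).trans h1
    have lim1 : Filter.Tendsto (fun n => ∫ ω in H ∩ G n, (M T ω - M 0 ω) ^ 2 ∂μ) Filter.atTop
        (nhds (∫ ω in H, (M T ω - M 0 ω) ^ 2 ∂μ)) := by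
      simp_rw [← integral_indicator (hHm.inter (hG _))]
      rw [← integral_indicator hHm]
      refine tendsto_integral_of_dominated_convergence
        (H.indicator fun ω => (M T ω - M 0 ω) ^ 2)
        (fun n => (hWm.indicator (hHm.inter (hG n))).aestronglyMeasurable)
        (hWH.integrable_indicator hHm) (fun n => Filter.Eventually.of_forall fun ω => ?_) ?_
      · rw [Real.norm_eq_abs, abs_of_nonneg (Set.indicator_nonneg (fun _ _ => sq_nonneg _) ω)]
        exact Set.indicator_le_indicator_of_subset Set.inter_subset_left (fun _ => sq_nonneg _) ω
      · filter_upwards [hcont, hvar] with ω hc hv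
        refine tendsto_const_nhds.congr' ?_
        filter_upwards [eventually_grid_sq_le hT hε hc hv hη] with n hn
        by_cases h : ω ∈ H
        · have hg : ω ∈ G n := ⟨fun j _ => by simpa [gridPoint_zero hT] using h n j, hn⟩
          rw [Set.indicator_of_mem h, Set.indicator_of_mem (Set.mem_inter h hg)]
        · rw [Set.indicator_of_notMem h, Set.indicator_of_notMem fun hh => h hh.1]
    have lim2 : Filter.Tendsto
        (fun n => ∫ ω, (B n).indicator (fun ω => K + |M T ω - M 0 ω|) ω ∂μ) Filter.atTop
        (nhds 0) := by
      have := tendsto_integral_of_dominated_convergence (μ := μ) (f := fun _ => (0 : ℝ))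
        (F := fun n => (B n).indicator fun ω => K + |M T ω - M 0 ω|)
        (fun ω => K + |M T ω - M 0 ω|)
        (fun n => (iW.indicator (hB n)).aestronglyMeasurable) iW
        (fun n => Filter.Eventually.of_forall fun ω => by
          rw [Real.norm_eq_abs, abs_of_nonneg (Set.indicator_nonneg (fun _ _ => by positivity) ω)]
          exact Set.indicator_le_self' (fun _ _ => by positivity) ω) (by
          filter_upwards [hcont] with ω hc
          refine tendsto_const_nhds.congr' ?_
          filter_upwards [eventually_grid_increment_le hT hc hδ] with n hn
          rw [Set.indicator_of_notMem]
          rintro ⟨i, hi, hlt⟩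
          exact absurd (hn i hi) (not_le.2 hlt))
      simpa using this
    exact le_of_tendsto_of_tendsto' lim1
      (((lim2.const_add δ).const_mul (2 * K)).const_add η) hle
  have hzero : ∫ ω in H, (M T ω - M 0 ω) ^ 2 ∂μ ≤ 0 := by
    refine le_of_forall_pos_le_add fun r hr => ?_
    -- `r/2 + 2K δ ≤ r` for this choice of `δ`.
    have h1 := hbound (r / 2) (by positivity) (r / (4 * (K + 1))) (by positivity)
    have h2 : 2 * K * (r / (4 * (K + 1)) + 0) ≤ r / 2 := by
      rw [add_zero, mul_div_assoc', div_le_iff₀ (by positivity)]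
      nlinarith
    linarith
  have hz := (setIntegral_eq_zero_iff_of_nonneg_ae
    (Filter.Eventually.of_forall fun ω => sq_nonneg (M T ω - M 0 ω)) hWH).1
    (le_antisymm hzero (integral_nonneg fun _ => sq_nonneg _))
  filter_upwards [(ae_restrict_iff' hHm).1 hz] with ω h hω
  exact sub_eq_zero.1 (pow_eq_zero_iff (two_ne_zero)|>.1 (h hω))

end Continuous

/-- A continuous martingale `(M_t)_{t ∈ [0,T]}` whose sample paths almost surely have
finite `(1+ε)`-variation on `[0,T]`, for some `ε ∈ (0,1)`, is almost surely constant
on `[0,T]`. -/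
theorem continuous_martingale_finite_onePlusEps_variation_constant
    {Ω : Type*} {m0 : MeasurableSpace Ω} {μ : Measure Ω} [IsProbabilityMeasure μ]
    (ℱ : Filtration ℝ m0) (T ε : ℝ) (hT : 0 < T) (hε : ε ∈ Set.Ioo (0 : ℝ) 1)
    (M : ℝ → Ω → ℝ)
    (hadapt : ∀ t ∈ Set.Icc (0 : ℝ) T, StronglyMeasurable[ℱ t] (M t))
    (hint : ∀ t ∈ Set.Icc (0 : ℝ) T, Integrable (M t) μ)
    (hmart : ∀ s ∈ Set.Icc (0 : ℝ) T, ∀ t ∈ Set.Icc (0 : ℝ) T, s ≤ t →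
      μ[M t | ℱ s] =ᵐ[μ] M s)
    (hcont : ∀ᵐ ω ∂μ, ContinuousOn (fun u => M u ω) (Set.Icc 0 T))
    (hvar : ∀ᵐ ω ∂μ, HasFinitePVariationOn (fun u => M u ω) (1 + ε) 0 T) :
    ∀ᵐ ω ∂μ, ∀ t ∈ Set.Icc (0 : ℝ) T, M t ω = M 0 ω := by
  have h0 : (0 : ℝ) ∈ Set.Icc 0 T := ⟨le_rfl, hT.le⟩
  have hTT : T ∈ Set.Icc 0 T := ⟨hT.le, le_rfl⟩
  have hend : M T =ᵐ[μ] M 0 := by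
    have hall := ae_all_iff.2 fun K : ℕ =>
      ae_eq_of_grid_bounded ℱ T ε hT hε M hadapt hint hmart hcont hvar K K.cast_nonneg
    filter_upwards [hall, hcont] with ω h hc
    obtain ⟨C, hC⟩ := isCompact_Icc.exists_bound_of_continuousOn
      (hc.sub (continuousOn_const (c := M 0 ω)))
    obtain ⟨K, hK⟩ := exists_nat_ge C
    exact h K fun n i => (hC _ (gridPoint_mem hT n i)).trans hK
  have hfix : ∀ t ∈ Set.Icc (0 : ℝ) T, M t =ᵐ[μ] M 0 := by
    intro t ht
    have h1 := condExp_congr_ae (m := ℱ t) hend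
    have h2 : μ[M 0 | ℱ t] = M 0 := condExp_of_stronglyMeasurable (ℱ.le t)
      ((hadapt 0 h0).mono (ℱ.mono ht.1)) (hint 0 h0)
    rw [h2] at h1
    exact (hmart t ht T hTT ht.2).symm.trans h1
  obtain ⟨S, hSc, hSd⟩ := TopologicalSpace.exists_countable_dense (Set.Icc (0 : ℝ) T)
  have hS : ∀ᵐ ω ∂μ, ∀ t ∈ S, M (t : ℝ) ω = M 0 ω :=
    (ae_ball_iff hSc).2 fun t _ => hfix t t.2
  filter_upwards [hS, hcont] with ω h hc t ht
  have := Continuous.ext_on hSd (continuousOn_iff_continuous_domRestrict.1 hc)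
    (continuous_const (y := M 0 ω)) (fun t ht => h t ht)
  exact congrFun this ⟨t, ht⟩
end
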